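/- For every integer n ≥ 1, the theory PA⁻ + IΣn + CARD(Σ_{n+1}) does not prove GPHP(Σ_{n+1}): there exists a model N of PA⁻ + IΣn satisfying CARD(Σ_{n+1}) together with an element a ∈ N such that for every b ∈ N there is a Σ_{n+1}-definable injection from [0,b) into [0,a). -/

import Mathlib

/- Shared development: first-order arithmetic in the language {0,1,+,·,<},
   the arithmetic hierarchy, fragments of arithmetic, and coded finite
   combinatorics inside models. -/

open FirstOrder Language

namespace ArithFC

/-- Function symbols of the language of arithmetic: 0, 1, +, ·. -/
inductive Func : ℕ → Type
  | zero : Func 0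
  | one : Func 0
  | add : Func 2
  | mul : Func 2

/-- Relation symbols of the language of arithmetic: <. -/
inductive Rel : ℕ → Type
  | lt : Rel 2

/-- The first-order language {0, 1, +, ·, <}. -/
def lang : Language :=
  { Functions := Func, Relations := Rel }

section Instances

variable (M : Type) [lang.Structure M]

instance : Zero M := ⟨Structure.funMap (L := lang) Func.zero ![]⟩
instance : One M := ⟨Structure.funMap (L := lang) Func.one ![]⟩
instance : Add M := ⟨fun x y => Structure.funMap (L := lang) Func.add ![x, y]⟩
instance : Mul M := ⟨fun x y => Structure.funMap (L := lang) Func.mul ![x, y]⟩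
instance : LT M := ⟨fun x y => Structure.RelMap (L := lang) Rel.lt ![x, y]⟩
instance : LE M := ⟨fun x y => x < y ∨ x = y⟩

end Instances

/-- The numeral `n` in a model. -/
def numM (M : Type) [lang.Structure M] : ℕ → M
  | 0 => 0
  | n + 1 => numM M n + 1

/-- `b` is nonstandard (greater than every numeral). -/
def Nonstd {M : Type} [lang.Structure M] (b : M) : Prop := ∀ n : ℕ, numM M n < b

/-- The atomic formula `t < u`. -/
def ltFm {α : Type} {n : ℕ} (t u : lang.Term (α ⊕ Fin n)) : lang.BoundedFormula α n :=
  BoundedFormula.rel (Rel.lt : lang.Relations 2) ![t, u]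

/-- Δ₀ formulas: built from atomic formulas by boolean connectives and
bounded universal quantification (this generates, up to logical equivalence,
the usual class of bounded formulas). -/
inductive IsDelta0 {α : Type} : ∀ n : ℕ, lang.BoundedFormula α n → Prop
  | falsum (n : ℕ) : IsDelta0 n BoundedFormula.falsum
  | equal (n : ℕ) (t u : lang.Term (α ⊕ Fin n)) : IsDelta0 n (BoundedFormula.equal t u)
  | rel (n l : ℕ) (R : lang.Relations l) (ts : Fin l → lang.Term (α ⊕ Fin n)) :
      IsDelta0 n (BoundedFormula.rel R ts)
  | imp (n : ℕ) {φ ψ : lang.BoundedFormula α n} :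
      IsDelta0 n φ → IsDelta0 n ψ → IsDelta0 n (φ.imp ψ)
  | bdAll (n : ℕ) (t : lang.Term (α ⊕ Fin n)) {φ : lang.BoundedFormula α (n + 1)} :
      IsDelta0 (n + 1) φ →
      IsDelta0 n
        (BoundedFormula.all ((ltFm (Term.var (Sum.inr (Fin.last n))) (t.liftAt 1 n)).imp φ))

mutual
  /-- Σ_m formulas. -/
  inductive SigmaFm {α : Type} : ℕ → ∀ n : ℕ, lang.BoundedFormula α n → Prop
    | delta0 (m n : ℕ) {φ : lang.BoundedFormula α n} : IsDelta0 n φ → SigmaFm m n φ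
    | ofPi (m n : ℕ) {φ : lang.BoundedFormula α n} : PiFm m n φ → SigmaFm (m + 1) n φ
    | ex (m n : ℕ) {φ : lang.BoundedFormula α (n + 1)} :
        SigmaFm (m + 1) (n + 1) φ → SigmaFm (m + 1) n φ.ex
  /-- Π_m formulas. -/
  inductive PiFm {α : Type} : ℕ → ∀ n : ℕ, lang.BoundedFormula α n → Prop
    | delta0 (m n : ℕ) {φ : lang.BoundedFormula α n} : IsDelta0 n φ → PiFm m n φ
    | ofSigma (m n : ℕ) {φ : lang.BoundedFormula α n} : SigmaFm m n φ → PiFm (m + 1) n φ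
    | all (m n : ℕ) {φ : lang.BoundedFormula α (n + 1)} :
        PiFm (m + 1) (n + 1) φ → PiFm (m + 1) n φ.all
end

/-- A `k`-ary relation on `M` is Σ_m-definable (with parameters from `M`). -/
def IsSigmaDef (m : ℕ) (M : Type) [lang.Structure M] {k : ℕ} (R : (Fin k → M) → Prop) : Prop :=
  ∃ (p : ℕ) (φ : lang.BoundedFormula (Fin k ⊕ Fin p) 0) (w : Fin p → M),
    SigmaFm m 0 φ ∧ ∀ v : Fin k → M, R v ↔ φ.Realize (Sum.elim v w) finZeroElim

/-- A subset of `M` is Σ_m-definable with parameters. -/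
def SigmaDef1 (m : ℕ) (M : Type) [lang.Structure M] (A : Set M) : Prop :=
  IsSigmaDef m M (k := 1) fun v => v 0 ∈ A

/-- A binary relation on `M` is Σ_m-definable with parameters. -/
def SigmaDef2 (m : ℕ) (M : Type) [lang.Structure M] (R : M → M → Prop) : Prop :=
  IsSigmaDef m M (k := 2) fun v => R (v 0) (v 1)

/-- A ternary relation on `M` is Σ_m-definable with parameters. -/
def SigmaDef3 (m : ℕ) (M : Type) [lang.Structure M] (R : M → M → M → Prop) : Prop :=
  IsSigmaDef m M (k := 3) fun v => R (v 0) (v 1) (v 2)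

/-- `M` is a model of PA⁻ (the nonnegative part of a discretely ordered
commutative semiring). -/
structure PAm (M : Type) [lang.Structure M] : Prop where
  add_assoc : ∀ x y z : M, x + y + z = x + (y + z)
  add_comm : ∀ x y : M, x + y = y + x
  mul_assoc : ∀ x y z : M, x * y * z = x * (y * z)
  mul_comm : ∀ x y : M, x * y = y * x
  ldistrib : ∀ x y z : M, x * (y + z) = x * y + x * z
  add_zero : ∀ x : M, x + 0 = x
  mul_zero : ∀ x : M, x * 0 = 0
  mul_one : ∀ x : M, x * 1 = x
  lt_trans : ∀ x y z : M, x < y → y < z → x < z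
  lt_irrefl : ∀ x : M, ¬x < x
  lt_total : ∀ x y : M, x < y ∨ x = y ∨ y < x
  add_lt_add : ∀ x y z : M, x < y → x + z < y + z
  mul_lt_mul : ∀ x y z : M, x < y → 0 < z → x * z < y * z
  sub_exists : ∀ x y : M, x < y → ∃ z, x + z = y
  zero_lt_one : (0 : M) < 1
  discrete : ∀ x : M, 0 < x → (1 : M) ≤ x
  zero_le : ∀ x : M, (0 : M) ≤ x

/-- `M` satisfies the Σ_m-induction scheme (with parameters). -/
def ISig (m : ℕ) (M : Type) [lang.Structure M] : Prop :=
  ∀ A : Set M, SigmaDef1 m M A → (0 : M) ∈ A → (∀ x, x ∈ A → x + 1 ∈ A) → ∀ x, x ∈ A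

/-- `M` satisfies the Σ_m-collection (bounding) scheme (with parameters). -/
def BSig (m : ℕ) (M : Type) [lang.Structure M] : Prop :=
  ∀ R : M → M → Prop, SigmaDef2 m M R → ∀ a : M,
    (∀ x, x < a → ∃ y, R x y) → ∃ b, ∀ x, x < a → ∃ y, y < b ∧ R x y

section Coding

variable {M : Type} [lang.Structure M]

/-- `z` is the Cantor pair `⟨x, y⟩`: `2z = (x+y)(x+y+1) + 2y`. -/
def IsPairC (z x y : M) : Prop := z + z = (x + y) * (x + y + 1) + (y + y)

/-- Gödel's β-function: `x = a mod ((i+1)·b + 1)`. -/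
def BetaC (a b i x : M) : Prop :=
  x < (i + 1) * b + 1 ∧ ∃ q, a = q * ((i + 1) * b + 1) + x

/-- The sequence coded by `s` (via a Cantor pair of β-function data) has value `x`
at place `i`. -/
def SeqAt (s i x : M) : Prop := ∃ a b, IsPairC s a b ∧ BetaC a b i x

/-- `c` codes the M-finite set `X` of cardinality `card`: `c = ⟨card, s⟩` where `s`
codes the strictly increasing enumeration of `X` of length `card`. -/
def CodesFinset (c : M) (X : Set M) (card : M) : Prop :=
  ∃ s, IsPairC c card s ∧
    (∀ i, i < card → ∃ x, x ∈ X ∧ SeqAt s i x) ∧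
    (∀ i j x y, i < j → j < card → SeqAt s i x → SeqAt s j y → x < y) ∧
    (∀ x, x ∈ X ↔ ∃ i, i < card ∧ SeqAt s i x)

/-- `X` is an M-finite (coded) set. -/
def MFinite (X : Set M) : Prop := ∃ c card : M, CodesFinset c X card

/-- `d` codes an `e`-element subset `D` of `[0, y)`, i.e. an element of `[y]^e`. -/
def CodesTupleIn (d e y : M) (D : Set M) : Prop :=
  CodesFinset d D e ∧ ∀ z ∈ D, z < y

/-- `f` codes a (finite) function defined on all of `[0, a)`. -/
def CodesFunOn (f a : M) : Prop :=
  ∀ x, x < a → (∃ y, SeqAt f x y) ∧ ∀ y y', SeqAt f x y → SeqAt f x y' → y = y'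

/-- `X` is an M-coded subset of `[0, a)`. -/
def MCodedSubset (a : M) (X : Set M) : Prop :=
  MFinite X ∧ ∀ x ∈ X, x < a

end Coding

/-- An `M`-ultrafilter on `a`: an ultrafilter of the Boolean algebra of
M-finite subsets of `[0, a)`. -/
structure MUltra (M : Type) [lang.Structure M] (a : M) where
  sets : Set (Set M)
  mem_coded : ∀ X ∈ sets, MCodedSubset a X
  univ_mem : {x : M | x < a} ∈ sets
  superset_mem : ∀ X Y : Set M, X ∈ sets → MCodedSubset a Y → X ⊆ Y → Y ∈ sets
  inter_mem : ∀ X Y : Set M, X ∈ sets → Y ∈ sets → X ∩ Y ∈ sets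
  empty_not_mem : (∅ : Set M) ∉ sets
  ultra : ∀ X : Set M, MCodedSubset a X → X ∈ sets ∨ {x : M | x < a ∧ x ∉ X} ∈ sets

section Principles

variable (M : Type) [lang.Structure M]

/-- `F` is (the graph of) a Σ_m-definable injection from `[0, y)` into `[0, x)`. -/
def SigmaInjRel (m : ℕ) (F : M → M → Prop) (y x : M) : Prop :=
  SigmaDef2 m M F ∧
    (∀ u, u < y → ∃ v, v < x ∧ F u v) ∧
    (∀ u v v', u < y → F u v → F u v' → v = v') ∧
    (∀ u u' v, u < y → u' < y → F u v → F u' v → u = u')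

/-- There exists a Σ_m-definable injection from `[0, y)` into `[0, x)`. -/
def ExSigmaInj (m : ℕ) (y x : M) : Prop := ∃ F : M → M → Prop, SigmaInjRel M m F y x

/-- There exists a Σ_m-definable injection from all of `M` into `[0, a)`. -/
def SigmaInjWhole (m : ℕ) (a : M) : Prop :=
  ∃ F : M → M → Prop, SigmaDef2 m M F ∧
    (∀ u, ∃ v, v < a ∧ F u v) ∧
    (∀ u v v', F u v → F u v' → v = v') ∧
    (∀ u u' v, F u v → F u' v → u = u')

/-- CARD(Σ_m): no Σ_m-definable multivalued map sends `M` injectively below `a`. -/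
def CARD (m : ℕ) : Prop :=
  ∀ F : M → M → Prop, SigmaDef2 m M F → ∀ a : M,
    (∀ x, ∃ y, y < a ∧ F x y) →
      ∃ x0 x1 y, x0 ≠ x1 ∧ y < a ∧ F x0 y ∧ F x1 y

/-- GPHP(Σ_m): for every `x` there is `y` with no Σ_m-definable injection of
`[0,y)` into `[0,x)`. -/
def GPHP (m : ℕ) : Prop := ∀ x : M, ∃ y : M, ¬ExSigmaInj M m y x

/-- WPHP(Σ_m): for `x > 0` there is no Σ_m-definable injection of `[0,2x)` into `[0,x)`. -/
def WPHP (m : ℕ) : Prop := ∀ x : M, 0 < x → ¬ExSigmaInj M m (x + x) x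

/-- `C` is a Σ_m-definable `k`-coloring of `[y]^e` (acting on codes of
`e`-element subsets of `[0,y)`, independently of the chosen code). -/
def IsColoring (m : ℕ) (e y k : M) (C : M → M → Prop) : Prop :=
  SigmaDef2 m M C ∧
    (∀ d D, CodesTupleIn d e y D → ∃ i, i < k ∧ C d i) ∧
    (∀ d d' D i i', CodesTupleIn d e y D → CodesTupleIn d' e y D → C d i → C d' i' → i = i')

/-- FRT^e_k(Σ_m): every Σ_m-definable `k`-coloring of some `[y]^e` has an
M-finite homogeneous set of cardinality `x`, for every `x`. -/
def FRT (m : ℕ) (e k : M) : Prop :=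
  ∀ x : M, ∃ y : M, ∀ C : M → M → Prop, IsColoring M m e y k C →
    ∃ (c : M) (H : Set M), CodesFinset c H x ∧ (∀ z ∈ H, z < y) ∧
      ∃ i, ∀ d D, CodesFinset d D e → D ⊆ H → C d i

/-- fairFRT^e_k(Σ_m): the homogeneous set is required to be given as the range of a
Σ_m-definable injection from `[0,x)` into `[0,y)`. -/
def FairFRT (m : ℕ) (e k : M) : Prop :=
  ∀ x : M, ∃ y : M, ∀ C : M → M → Prop, IsColoring M m e y k C →
    ∃ H : M → M → Prop, SigmaInjRel M m H x y ∧
      ∃ i, ∀ d D, CodesFinset d D e → (∀ z ∈ D, ∃ u, u < x ∧ H u z) → C d i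

/-- `C` is a Σ_m-definable `k`-coloring of `[0, y)`. -/
def IsColoring1 (m : ℕ) (y k : M) (C : M → M → Prop) : Prop :=
  SigmaDef2 m M C ∧
    (∀ z, z < y → ∃ i, i < k ∧ C z i) ∧
    (∀ z i i', z < y → C z i → C z i' → i = i')

/-- FRT¹_k(Σ_m): every Σ_m-definable `k`-coloring of some `[0,y)` has an M-finite
homogeneous set of cardinality `x`, for every `x`. -/
def FRT1 (m : ℕ) (k : M) : Prop :=
  ∀ x : M, ∃ y : M, ∀ C : M → M → Prop, IsColoring1 M m y k C →
    ∃ (c : M) (H : Set M), CodesFinset c H x ∧ (∀ z ∈ H, z < y) ∧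
      ∃ i, ∀ z ∈ H, C z i

/-- fairFRT¹_k(Σ_m). -/
def FairFRT1 (m : ℕ) (k : M) : Prop :=
  ∀ x : M, ∃ y : M, ∀ C : M → M → Prop, IsColoring1 M m y k C →
    ∃ H : M → M → Prop, SigmaInjRel M m H x y ∧
      ∃ i, ∀ u v, u < x → H u v → C v i

end Principles

section Approx

variable {M : Type} [lang.Structure M]

/-- `f` is (the graph of) a partial function. -/
def IsPartialFun (f : M → M → Prop) : Prop := ∀ x y y', f x y → f x y' → y = y'

/-- `s` codes an approximation to the partial function `f` of length `b`. -/
def IsApprox (f : M → M → Prop) (s b : M) : Prop :=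
  (∀ i, i < b → ∃ v, SeqAt s i v) ∧
    (∀ i u v x y, i + 1 < b → SeqAt s i u → SeqAt s (i + 1) v → x ≤ u → f x y → y ≤ v)

/-- `s` codes a `g`-stretched approximation to the partial function `f` of length `b`. -/
def IsStretchedApprox (f g : M → M → Prop) (s b : M) : Prop :=
  (∀ i, i < b → ∃ v, SeqAt s i v) ∧
    (∀ i u w v x y, i + 1 < b → SeqAt s i u → g u w → SeqAt s (i + 1) v →
      x ≤ w → f x y → y ≤ v)

/-- The eventual (limit) value of `fun s => h s ·` is `x`. -/
def EvLim (h : M → M → Prop) (x : M) : Prop := ∃ s : M, ∀ t, s < t → h t x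

end Approx

/-- PΣ_m: every partial Σ_m-definable function admits approximations of every length. -/
def PSig (m : ℕ) (M : Type) [lang.Structure M] : Prop :=
  ∀ f : M → M → Prop, SigmaDef2 m M f → IsPartialFun f → ∀ b : M, ∃ s, IsApprox f s b

section Extensions

variable (M N : Type) [lang.Structure M] [lang.Structure N]

/-- `g : M → N` is Σ_m-elementary: Σ_m formulas with parameters from `M` transfer. -/
def SigmaElem (m : ℕ) (g : M → N) : Prop :=
  ∀ (p : ℕ) (φ : lang.BoundedFormula (Fin p) 0), SigmaFm m 0 φ →
    ∀ v : Fin p → M, (φ.Realize v finZeroElim ↔ φ.Realize (g ∘ v) finZeroElim)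

/-- The extension `g : M → N` is cofinal. -/
def Cofinal (g : M → N) : Prop := ∀ z : N, ∃ x : M, z ≤ g x

/-- `[0,a]^M = [0,a]^N`: every element of `N` below `g a` comes from `M`. -/
def SameBelow (g : M → N) (a : M) : Prop := ∀ z : N, z ≤ g a → ∃ x : M, g x = z

end Extensions

section Ramsey

variable {M : Type} [lang.Structure M]

/-- `f` is an M-coded `k`-coloring of `[y]^e` (assigning colors to codes of
`e`-subsets of `[0,y)`, independently of the code). -/
def CodedColoring (f e y k : M) : Prop :=
  (∀ d D, CodesTupleIn d e y D → ∃ i, i < k ∧ SeqAt f d i) ∧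
    (∀ d d' D i i', CodesTupleIn d e y D → CodesTupleIn d' e y D →
      SeqAt f d i → SeqAt f d' i' → i = i')

/-- The coded coloring `f` of `[y]^e` has an M-coded homogeneous set of cardinality `x`. -/
def CodedHomog (f e y x : M) : Prop :=
  ∃ (c : M) (H : Set M), CodesFinset c H x ∧ (∀ z ∈ H, z < y) ∧
    ∃ i, ∀ d D, CodesFinset d D e → D ⊆ H → SeqAt f d i

/-- `y = r(x, e, k)`: `y` is the least size guaranteeing coded homogeneous sets of
cardinality `x` for all coded `k`-colorings of `e`-subsets. -/
def IsRamsey (x e k y : M) : Prop :=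
  (∀ f, CodedColoring f e y k → CodedHomog f e y x) ∧
    (∀ y', y' < y → ∃ f, CodedColoring f e y' k ∧ ¬CodedHomog f e y' x)

/-- `y = r^(b)(x, e, k)`: the `b`-th iterate of the Ramsey function inside `M`. -/
def IterRamsey (x e k b y : M) : Prop :=
  ∃ s : M, SeqAt s 0 x ∧ SeqAt s b y ∧ (∀ i, i ≤ b → ∃ u, SeqAt s i u) ∧
    (∀ i u v, i < b → SeqAt s i u → SeqAt s (i + 1) v → IsRamsey u e k v)

end Ramsey

end ArithFC

namespace AH

theorem compPred_iff {α : Type} [Primcodable α] {p : α → Prop} :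
    ComputablePred p ↔ ∃ f : α → Bool, Computable f ∧ ∀ x, p x ↔ f x = true := by
  constructor
  · rintro ⟨h, hc⟩
    exact ⟨_, hc, fun x => by simp⟩
  · rintro ⟨f, hf, h⟩
    refine ⟨fun x => decidable_of_iff _ (h x).symm, hf.of_eq fun x => ?_⟩
    rw [Bool.eq_iff_iff, ← h x]; simp

/-- Semantic arithmetic hierarchy on Primcodable types: level `0` is the class of computable
predicates, level `k+1` is `∃ y, ¬ r (x, y)` with `r` of level `k`. -/
def Sg : ℕ → ∀ (α : Type) [Primcodable α], (α → Prop) → Prop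
  | 0, _, _, p => ComputablePred p
  | k + 1, α, _, p => ∃ r : α × ℕ → Prop, Sg k (α × ℕ) r ∧ ∀ x, p x ↔ ∃ y, ¬ r (x, y)

variable {α β γ : Type} [Primcodable α] [Primcodable β] [Primcodable γ]

theorem Sg.of_iff {k : ℕ} {p q : α → Prop} (hp : Sg k α p) (h : ∀ x, q x ↔ p x) : Sg k α q := by
  have : q = p := funext fun x => propext (h x)
  rwa [this]

theorem Sg.comp {k : ℕ} : ∀ {α β : Type} [Primcodable α] [Primcodable β] {p : β → Prop} {f : α → β},
    Sg k β p → Computable f → Sg k α (fun x => p (f x)) := by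
  induction k with
  | zero =>
    intro α β _ _ p f hp hf
    obtain ⟨g, hg, h⟩ := compPred_iff.1 hp
    exact compPred_iff.2 ⟨_, hg.comp hf, fun x => h _⟩
  | succ k ih =>
    intro α β _ _ p f hp hf
    obtain ⟨r, hr, h⟩ := hp
    refine ⟨fun z => r (f z.1, z.2), ih hr ((hf.comp Computable.fst).pair Computable.snd), fun x => h _⟩

theorem Sg.comp_not {p : α → Prop} (hp : Sg 0 α p) : Sg 0 α (fun x => ¬ p x) := by
  obtain ⟨g, hg, h⟩ := compPred_iff.1 hp
  refine compPred_iff.2 ⟨fun x => !g x, Primrec.not.to_comp.comp hg, fun x => by simp [h]⟩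

theorem Sg.of_not {k : ℕ} {p : α → Prop} (hp : Sg k α (fun x => ¬ p x)) : Sg (k + 1) α p :=
  ⟨fun z => ¬ p z.1, hp.comp Computable.fst, fun x => by simp⟩

theorem Sg.succ {k : ℕ} : ∀ {α : Type} [Primcodable α] {p : α → Prop},
    Sg k α p → Sg (k + 1) α p := by
  induction k with
  | zero =>
    intro α _ p hp
    exact hp.comp_not.of_not
  | succ k ih =>
    intro α _ p hp
    obtain ⟨r, hr, h⟩ := hp
    exact ⟨r, ih hr, h⟩

theorem Sg.not {k : ℕ} {p : α → Prop} (hp : Sg k α p) : Sg (k + 1) α (fun x => ¬ p x) :=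
  Sg.of_not (hp.of_iff fun x => by simp)

theorem Sg.mono {k l : ℕ} (h : k ≤ l) {p : α → Prop} (hp : Sg k α p) : Sg l α p := by
  induction h with
  | refl => exact hp
  | step _ ih => exact ih.succ

theorem Sg.of_comp {k : ℕ} {p : α → Prop} (hp : ComputablePred p) : Sg k α p :=
  Sg.mono (Nat.zero_le k) (show Sg 0 α p from hp)

theorem Sg.and_or {k : ℕ} : ∀ {α : Type} [Primcodable α] {p q : α → Prop},
    Sg k α p → Sg k α q → Sg k α (fun x => p x ∧ q x) ∧ Sg k α (fun x => p x ∨ q x) := by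
  induction k with
  | zero =>
    intro α _ p q hp hq
    obtain ⟨g, hg, h⟩ := compPred_iff.1 hp
    obtain ⟨g', hg', h'⟩ := compPred_iff.1 hq
    exact ⟨compPred_iff.2 ⟨fun x => g x && g' x, Primrec.and.to_comp.comp hg hg', fun x => by simp [h, h']⟩,
      compPred_iff.2 ⟨fun x => g x || g' x, Primrec.or.to_comp.comp hg hg', fun x => by simp [h, h']⟩⟩
  | succ k ih =>
    intro α _ p q hp hq
    obtain ⟨r, hr, h⟩ := hp
    obtain ⟨s, hs, h'⟩ := hq
    constructor
    · refine ⟨fun z => r (z.1, z.2.unpair.1) ∨ s (z.1, z.2.unpair.2),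
        (ih (hr.comp (Computable.fst.pair
          (Computable.fst.comp (Computable.unpair.comp Computable.snd))))
          (hs.comp (Computable.fst.pair
          (Computable.snd.comp (Computable.unpair.comp Computable.snd))))).2, fun x => ?_⟩
      show (p x ∧ q x) ↔ _
      rw [h, h']
      constructor
      · rintro ⟨⟨y, hy⟩, ⟨z, hz⟩⟩
        exact ⟨Nat.pair y z, by simp [hy, hz]⟩
      · rintro ⟨y, hy⟩
        push Not at hy
        exact ⟨⟨_, hy.1⟩, ⟨_, hy.2⟩⟩
    · refine ⟨fun z => r z ∧ s z, (ih hr hs).1, fun x => ?_⟩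
      show (p x ∨ q x) ↔ _
      rw [h, h', ← exists_or]
      exact exists_congr fun y => by tauto

theorem Sg.and {k : ℕ} {p q : α → Prop} (hp : Sg k α p) (hq : Sg k α q) :
    Sg k α (fun x => p x ∧ q x) := (Sg.and_or hp hq).1

theorem Sg.or {k : ℕ} {p q : α → Prop} (hp : Sg k α p) (hq : Sg k α q) :
    Sg k α (fun x => p x ∨ q x) := (Sg.and_or hp hq).2

theorem Sg.ex {k : ℕ} {p : α × ℕ → Prop} (hp : Sg (k + 1) (α × ℕ) p) :
    Sg (k + 1) α (fun x => ∃ y, p (x, y)) := by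
  obtain ⟨r, hr, h⟩ := hp
  refine ⟨fun z => r ((z.1, z.2.unpair.1), z.2.unpair.2), hr.comp
    ((Computable.fst.pair (Computable.fst.comp (Computable.unpair.comp Computable.snd))).pair
      (Computable.snd.comp (Computable.unpair.comp Computable.snd))), fun x => ?_⟩
  simp only [h]
  constructor
  · rintro ⟨y, z, hy⟩
    exact ⟨Nat.pair y z, by simpa using hy⟩
  · rintro ⟨y, hy⟩
    exact ⟨_, _, hy⟩

theorem Sg.ex' [Inhabited β] {k : ℕ} {p : α × β → Prop} (hp : Sg (k + 1) (α × β) p) :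
    Sg (k + 1) α (fun x => ∃ y, p (x, y)) := by
  have hd : Computable (fun z : α × ℕ => (z.1, ((Encodable.decode z.2 : Option β).getD default))) :=
    Computable.fst.pair (Computable.option_getD (Computable.decode.comp Computable.snd)
      (Computable.const default))
  refine (hp.comp hd).ex.of_iff fun x => ?_
  constructor
  · rintro ⟨y, hy⟩
    exact ⟨Encodable.encode y, by simpa using hy⟩
  · rintro ⟨y, hy⟩
    exact ⟨_, hy⟩

theorem compPred_lt : ComputablePred (fun z : ℕ × ℕ => z.1 < z.2) :=
  compPred_iff.2 ⟨fun z => decide (z.1 < z.2), Primrec.nat_lt.decide.to_comp, fun x => by simp⟩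

theorem Sg.eq [DecidableEq β] {k : ℕ} {f g : α → β} (hf : Computable f) (hg : Computable g) :
    Sg k α (fun x => f x = g x) :=
  Sg.of_comp (compPred_iff.2 ⟨fun x => decide (f x = g x),
    (Primrec.eq (α := β)).decide.to_comp.comp hf hg, fun x => by simp⟩)

theorem Sg.lt {k : ℕ} {f g : α → ℕ} (hf : Computable f) (hg : Computable g) :
    Sg k α (fun x => f x < g x) :=
  Sg.of_comp (compPred_iff.2 ⟨fun x => decide (f x < g x),
    (Primrec.nat_lt).decide.to_comp.comp hf hg, fun x => by simp⟩)

theorem Sg.le {k : ℕ} {f g : α → ℕ} (hf : Computable f) (hg : Computable g) :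
    Sg k α (fun x => f x ≤ g x) :=
  (Sg.lt hf (Computable.succ.comp hg)).of_iff fun x => by simp

theorem Sg.ball_zero {p : α × ℕ → Prop} (hp : Sg 0 (α × ℕ) p) {b : α → ℕ} (hb : Computable b) :
    Sg 0 α (fun x => ∀ y < b x, p (x, y)) := by
  obtain ⟨g, hg, h⟩ := compPred_iff.1 hp
  refine compPred_iff.2 ⟨fun x => Nat.rec (motive := fun _ => Bool) true (fun i acc => acc && g (x, i)) (b x),
    Computable.nat_rec hb (Computable.const true)
      (h := fun x z => z.2 && g (x, z.1))
      (Primrec.and.to_comp.comp (Computable.snd.comp Computable.snd)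
        (hg.comp (Computable.fst.pair (Computable.fst.comp Computable.snd)))).to₂, fun x => ?_⟩
  show (∀ y < b x, p (x, y)) ↔ Nat.rec (motive := fun _ => Bool) true (fun i acc => acc && g (x, i)) (b x) = true
  generalize b x = m
  induction m with
  | zero => simp
  | succ m ih =>
    simp only [Nat.lt_succ_iff_lt_or_eq, Bool.and_eq_true, ← ih, ← h]
    constructor
    · intro H; exact ⟨fun y hy => H y (Or.inl hy), H m (Or.inr rfl)⟩
    · rintro ⟨H1, H2⟩ y (hy | rfl)
      · exact H1 y hy
      · exact H2

theorem Sg.bex {k : ℕ} {p : α × ℕ → Prop} (hp : Sg k (α × ℕ) p) {b : α → ℕ} (hb : Computable b) :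
    Sg k α (fun x => ∃ y < b x, p (x, y)) := by
  cases k with
  | zero => exact (hp.comp_not.ball_zero hb).comp_not.of_iff fun x => by push Not; rfl
  | succ k => exact ((Sg.lt Computable.snd (hb.comp Computable.fst)).and hp).ex

theorem comp_getD {l : α → List ℕ} {i : α → ℕ} (hl : Computable l) (hi : Computable i) :
    Computable (fun x => (l x).getD (i x) 0) :=
  Computable₂.comp (f := fun (l : List ℕ) (i : ℕ) => l.getD i 0)
    (Primrec.list_getD (0 : ℕ)).to_comp hl hi

theorem exists_list (P : ℕ → ℕ → Prop) (b : ℕ) (h : ∀ y < b, ∃ z, P y z) :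
    ∃ l : List ℕ, l.length = b ∧ ∀ y < b, P y (l.getD y 0) := by
  classical
  choose! f hf using h
  exact ⟨(List.range b).map f, by simp, fun y hy => by
    simpa [List.getD_eq_getElem?_getD, hy] using hf y hy⟩

theorem Sg.ball {k : ℕ} : ∀ {α : Type} [Primcodable α] {p : α × ℕ → Prop}, Sg k (α × ℕ) p →
    ∀ {b : α → ℕ}, Computable b → Sg k α (fun x => ∀ y < b x, p (x, y)) := by
  cases k with
  | zero => intro α _ p hp b hb; exact hp.ball_zero hb
  | succ k =>
    intro α _ p hp b hb
    obtain ⟨r, hr, h⟩ := hp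
    have h1 : Sg k ((α × List ℕ) × ℕ) (fun z => r ((z.1.1, z.2), z.1.2.getD z.2 0)) :=
      hr.comp (((Computable.fst.comp Computable.fst).pair Computable.snd).pair
        (comp_getD (Computable.snd.comp Computable.fst) Computable.snd))
    have h1' : Sg k (α × List ℕ) (fun z => ∃ y < b z.1, r ((z.1, y), z.2.getD y 0)) :=
      Sg.bex (p := fun z : (α × List ℕ) × ℕ => r ((z.1.1, z.2), z.1.2.getD z.2 0)) h1
        (b := fun z : α × List ℕ => b z.1) (hb.comp Computable.fst)
    have h1'' : Sg (k + 1) (α × List ℕ) (fun z => ¬ ∃ y < b z.1, r ((z.1, y), z.2.getD y 0)) :=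
      Sg.not h1'
    have h2 : Sg (k + 1) α (fun x => ∃ l : List ℕ, ¬ ∃ y < b x, r ((x, y), l.getD y 0)) :=
      Sg.ex' (p := fun z : α × List ℕ => ¬ ∃ y < b z.1, r ((z.1, y), z.2.getD y 0))
        h1''
    refine h2.of_iff fun x => ?_
    constructor
    · intro H
      obtain ⟨l, -, hl⟩ := exists_list (fun y z => ¬ r ((x, y), z)) (b x) (fun y hy => (h _).1 (H y hy))
      exact ⟨l, by push Not; exact hl⟩
    · rintro ⟨l, hl⟩ y hy
      push Not at hl
      exact (h _).2 ⟨_, hl y hy⟩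

end AH


namespace AH

variable {α β γ : Type} [Primcodable α] [Primcodable β] [Primcodable γ]

/-- Δ_{n+1} predicates. -/
def Dl (n : ℕ) (p : α → Prop) : Prop := Sg (n + 1) α p ∧ Sg (n + 1) α (fun x => ¬ p x)

/-- Total functions with Σ_{n+1} graph. -/
def Cf (n : ℕ) (f : α → β) : Prop := Sg (n + 1) (α × β) (fun z => f z.1 = z.2)

variable {n : ℕ}

theorem Cf.of_eq {f g : α → β} (hf : Cf n f) (h : ∀ x, f x = g x) : Cf n g := by
  have : f = g := funext h
  rwa [← this]

theorem Cf.of_comp {f : α → β} (hf : Computable f) : Cf n f :=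
  (Sg.eq (Computable.encode.comp (hf.comp Computable.fst)) (Computable.encode.comp Computable.snd)).of_iff
    fun x => by simp

theorem Sg.compCf [Inhabited β] {p : β → Prop} {f : α → β} (hp : Sg (n + 1) β p) (hf : Cf n f) :
    Sg (n + 1) α (fun x => p (f x)) := by
  have h1 : Sg (n + 1) (α × β) (fun z => f z.1 = z.2 ∧ p z.2) :=
    Sg.and hf (hp.comp Computable.snd)
  exact (Sg.ex' h1).of_iff fun x => by simp

theorem Cf.comp [Inhabited β] {g : β → γ} {f : α → β} (hg : Cf n g) (hf : Cf n f) :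
    Cf n (fun x => g (f x)) := by
  have h1 : Sg (n + 1) ((α × γ) × β) (fun z => f z.1.1 = z.2 ∧ g z.2 = z.1.2) :=
    Sg.and (Sg.comp (f := fun z : (α × γ) × β => (z.1.1, z.2)) hf
      ((Computable.fst.comp Computable.fst).pair Computable.snd))
      (Sg.comp (f := fun z : (α × γ) × β => (z.2, z.1.2)) hg
      (Computable.snd.pair (Computable.snd.comp Computable.fst)))
  exact (Sg.ex' h1).of_iff fun x => by simp

theorem Cf.pair {f : α → β} {g : α → γ} (hf : Cf n f) (hg : Cf n g) :
    Cf n (fun x => (f x, g x)) := by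
  have h1 : Sg (n + 1) (α × (β × γ)) (fun z => f z.1 = z.2.1 ∧ g z.1 = z.2.2) :=
    Sg.and (Sg.comp (f := fun z : α × (β × γ) => (z.1, z.2.1)) hf
      (Computable.fst.pair (Computable.fst.comp Computable.snd)))
      (Sg.comp (f := fun z : α × (β × γ) => (z.1, z.2.2)) hg
      (Computable.fst.pair (Computable.snd.comp Computable.snd)))
  exact h1.of_iff fun x => by simp [Prod.ext_iff]

theorem Cf.id : Cf n (fun x : α => x) := Cf.of_comp Computable.id
theorem Cf.fst : Cf n (fun x : α × β => x.1) := Cf.of_comp Computable.fst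
theorem Cf.snd : Cf n (fun x : α × β => x.2) := Cf.of_comp Computable.snd
theorem Cf.const (b : β) : Cf n (fun _ : α => b) := Cf.of_comp (Computable.const b)

theorem Cf.comp2 [Inhabited β] [Inhabited γ] {δ : Type} [Primcodable δ] {F : β → γ → δ} (hF : Computable₂ F) {f : α → β} {g : α → γ}
    (hf : Cf n f) (hg : Cf n g) : Cf n (fun x => F (f x) (g x)) :=
  Cf.comp (g := fun z : β × γ => F z.1 z.2) (f := fun x => (f x, g x)) (Cf.of_comp hF) (hf.pair hg)

theorem Cf.comp1 [Inhabited β] {F : β → γ} (hF : Computable F) {f : α → β}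
    (hf : Cf n f) : Cf n (fun x => F (f x)) :=
  Cf.comp (Cf.of_comp hF) hf

theorem Cf.add {f g : α → ℕ} (hf : Cf n f) (hg : Cf n g) : Cf n (fun x => f x + g x) :=
  Cf.comp2 (F := fun a b : ℕ => a + b) Primrec.nat_add.to_comp hf hg
theorem Cf.mul {f g : α → ℕ} (hf : Cf n f) (hg : Cf n g) : Cf n (fun x => f x * g x) :=
  Cf.comp2 (F := fun a b : ℕ => a * b) Primrec.nat_mul.to_comp hf hg
theorem Cf.sub {f g : α → ℕ} (hf : Cf n f) (hg : Cf n g) : Cf n (fun x => f x - g x) :=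
  Cf.comp2 (F := fun a b : ℕ => a - b) Primrec.nat_sub.to_comp hf hg
theorem Cf.min {f g : α → ℕ} (hf : Cf n f) (hg : Cf n g) : Cf n (fun x => Min.min (f x) (g x)) :=
  Cf.comp2 (F := fun a b : ℕ => Min.min a b) Primrec.nat_min.to_comp hf hg
theorem Cf.npair {f g : α → ℕ} (hf : Cf n f) (hg : Cf n g) : Cf n (fun x => Nat.pair (f x) (g x)) :=
  Cf.comp2 (F := fun a b : ℕ => Nat.pair a b) Primrec₂.natPair.to_comp hf hg
theorem comp_left : Computable (fun x : ℕ => x.unpair.1) := Computable.fst.comp Computable.unpair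
theorem comp_right : Computable (fun x : ℕ => x.unpair.2) := Computable.snd.comp Computable.unpair
theorem Cf.left {f : α → ℕ} (hf : Cf n f) : Cf n (fun x => (f x).unpair.1) :=
  Cf.comp1 (F := fun x : ℕ => x.unpair.1) comp_left hf
theorem Cf.right {f : α → ℕ} (hf : Cf n f) : Cf n (fun x => (f x).unpair.2) :=
  Cf.comp1 (F := fun x : ℕ => x.unpair.2) comp_right hf

theorem primrec_pow : Primrec₂ (fun a b : ℕ => a ^ b) := by
  have : Primrec₂ (fun a b : ℕ => Nat.rec (motive := fun _ => ℕ) 1 (fun _ IH => a * IH) b) :=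
    Primrec.nat_rec (f := fun _ : ℕ => 1) (g := fun (a : ℕ) (z : ℕ × ℕ) => a * z.2) (Primrec.const 1)
      (Primrec.nat_mul.comp Primrec.fst (Primrec.snd.comp Primrec.snd))
  refine this.of_eq fun a b => ?_
  induction b with
  | zero => rfl
  | succ b ih => rw [pow_succ, mul_comm, ← ih]

theorem Cf.pow {f g : α → ℕ} (hf : Cf n f) (hg : Cf n g) : Cf n (fun x => f x ^ g x) :=
  Cf.comp2 (F := fun a b : ℕ => a ^ b) primrec_pow.to_comp hf hg

theorem Dl.of_iff {p q : α → Prop} (hp : Dl n p) (h : ∀ x, q x ↔ p x) : Dl n q := by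
  have : q = p := funext fun x => propext (h x)
  rwa [this]
theorem Dl.of_comp {p : α → Prop} (hp : ComputablePred p) : Dl n p :=
  ⟨Sg.of_comp hp, Sg.mono (Nat.zero_le _) (Sg.comp_not (show Sg 0 α p from hp))⟩
theorem Dl.of_Sg {p : α → Prop} (hp : Sg n α p) : Dl n p := ⟨hp.succ, hp.not⟩
theorem Dl.not {p : α → Prop} (hp : Dl n p) : Dl n (fun x => ¬ p x) :=
  ⟨hp.2, hp.1.of_iff fun x => by simp⟩
theorem Dl.of_not {p : α → Prop} (hp : Dl n (fun x => ¬ p x)) : Dl n p :=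
  hp.not.of_iff fun x => by simp
theorem Dl.and {p q : α → Prop} (hp : Dl n p) (hq : Dl n q) : Dl n (fun x => p x ∧ q x) :=
  ⟨hp.1.and hq.1, (hp.2.or hq.2).of_iff fun x => by tauto⟩
theorem Dl.or {p q : α → Prop} (hp : Dl n p) (hq : Dl n q) : Dl n (fun x => p x ∨ q x) :=
  ⟨hp.1.or hq.1, (hp.2.and hq.2).of_iff fun x => by tauto⟩
theorem Dl.imp {p q : α → Prop} (hp : Dl n p) (hq : Dl n q) : Dl n (fun x => p x → q x) :=
  (hp.not.or hq).of_iff fun x => by tauto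
theorem Dl.comp [Inhabited β] {p : β → Prop} {f : α → β} (hp : Dl n p) (hf : Cf n f) :
    Dl n (fun x => p (f x)) := ⟨hp.1.compCf hf, Sg.compCf (p := fun y => ¬ p y) hp.2 hf⟩
theorem Dl.const (P : Prop) : Dl n (fun _ : α => P) := by
  classical
  exact Dl.of_comp (compPred_iff.2 ⟨fun _ => decide P, Computable.const _, fun x => by simp⟩)

theorem Dl.eq {f g : α → ℕ} (hf : Cf n f) (hg : Cf n g) : Dl n (fun x => f x = g x) :=
  Dl.comp (p := fun z : ℕ × ℕ => z.1 = z.2) (f := fun x => (f x, g x))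
    (Dl.of_comp (Sg.eq (k := 0) Computable.fst Computable.snd)) (hf.pair hg)
theorem Dl.lt {f g : α → ℕ} (hf : Cf n f) (hg : Cf n g) : Dl n (fun x => f x < g x) :=
  Dl.comp (p := fun z : ℕ × ℕ => z.1 < z.2) (f := fun x => (f x, g x))
    (Dl.of_comp compPred_lt) (hf.pair hg)
theorem Dl.le {f g : α → ℕ} (hf : Cf n f) (hg : Cf n g) : Dl n (fun x => f x ≤ g x) :=
  (Dl.lt hg hf).not.of_iff fun x => by simp

theorem Dl.ball [Inhabited α] {p : α × ℕ → Prop} (hp : Dl n p) {b : α → ℕ} (hb : Cf n b) :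
    Dl n (fun x => ∀ y < b x, p (x, y)) := by
  have e : Computable (fun z : (α × ℕ) × ℕ => (z.1.1, z.2)) :=
    (Computable.fst.comp Computable.fst).pair Computable.snd
  have h1 : Sg (n + 1) (α × ℕ) (fun z => ∀ y < z.2, p (z.1, y)) :=
    Sg.ball (p := fun z : (α × ℕ) × ℕ => p (z.1.1, z.2)) (hp.1.comp e) Computable.snd
  have h2 : Sg (n + 1) (α × ℕ) (fun z => ∃ y < z.2, ¬ p (z.1, y)) :=
    Sg.bex (p := fun z : (α × ℕ) × ℕ => ¬ p (z.1.1, z.2))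
      (Sg.comp (p := fun w => ¬ p w) hp.2 e) Computable.snd
  exact ⟨Sg.compCf (f := fun x => (x, b x)) h1 (Cf.id.pair hb),
    (Sg.compCf (f := fun x => (x, b x)) h2 (Cf.id.pair hb)).of_iff fun x => by push Not; rfl⟩

theorem Dl.bex [Inhabited α] {p : α × ℕ → Prop} (hp : Dl n p) {b : α → ℕ} (hb : Cf n b) :
    Dl n (fun x => ∃ y < b x, p (x, y)) :=
  (hp.not.ball hb).not.of_iff fun x => by push Not; rfl

theorem Dl.finAll {k : ℕ} {p : Fin k → α → Prop} (hp : ∀ i, Dl n (p i)) :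
    Dl n (fun x => ∀ i, p i x) := by
  induction k with
  | zero => exact (Dl.const True).of_iff fun x => by simp
  | succ k ih =>
    exact ((hp 0).and (ih fun i => hp i.succ)).of_iff fun x => by rw [Fin.forall_fin_succ]

theorem Dl.finiteAll {ι : Type} [Finite ι] {p : ι → α → Prop} (hp : ∀ i, Dl n (p i)) :
    Dl n (fun x => ∀ i, p i x) := by
  obtain ⟨k, ⟨e⟩⟩ := Finite.exists_equiv_fin ι
  exact (Dl.finAll fun j => hp (e.symm j)).of_iff fun x =>
    ⟨fun h j => h _, fun h i => by simpa using h (e i)⟩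

open Classical in
theorem Cf.ite {p : α → Prop} (hp : Dl n p) {f g : α → β} (hf : Cf n f) (hg : Cf n g) :
    Cf n (fun x => if p x then f x else g x) := by
  have h1 : Sg (n + 1) (α × β) (fun z => (p z.1 ∧ f z.1 = z.2) ∨ (¬ p z.1 ∧ g z.1 = z.2)) :=
    ((hp.1.comp Computable.fst).and hf).or (Sg.and (Sg.comp (p := fun x => ¬ p x) hp.2 Computable.fst) hg)
  refine h1.of_iff fun z => ?_
  by_cases h : p z.1 <;> simp [h]

theorem Cf.exists_find {ρ : α × ℕ → Prop} (hρ : Dl n ρ) (h : ∀ x, ∃ y, ρ (x, y)) :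
    ∃ f : α → ℕ, Cf n f ∧ ∀ x, ρ (x, f x) ∧ ∀ y < f x, ¬ ρ (x, y) := by
  classical
  refine ⟨fun x => Nat.find (h x), ?_, fun x => ⟨Nat.find_spec (h x), fun y hy => Nat.find_min (h x) hy⟩⟩
  have e : Computable (fun z : (α × ℕ) × ℕ => (z.1.1, z.2)) :=
    (Computable.fst.comp Computable.fst).pair Computable.snd
  have h1 : Sg (n + 1) (α × ℕ) (fun z => ∀ y < z.2, ¬ ρ (z.1, y)) :=
    Sg.ball (p := fun z : (α × ℕ) × ℕ => ¬ ρ (z.1.1, z.2))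
      (Sg.comp (p := fun w => ¬ ρ w) hρ.2 e) Computable.snd
  exact (hρ.1.and h1).of_iff fun z => by rw [Nat.find_eq_iff]

theorem Cf.uniformize {R : α × ℕ → Prop} (hR : Sg (n + 1) (α × ℕ) R) (h : ∀ x, ∃ y, R (x, y)) :
    ∃ f : α → ℕ, Cf n f ∧ ∀ x, R (x, f x) := by
  obtain ⟨r, hr, hr'⟩ := hR
  have e : Computable (fun z : α × ℕ => ((z.1, z.2.unpair.1), z.2.unpair.2)) :=
    (Computable.fst.pair (comp_left.comp Computable.snd)).pair (comp_right.comp Computable.snd)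
  have h1 : Dl n (fun z : α × ℕ => ¬ r ((z.1, z.2.unpair.1), z.2.unpair.2)) :=
    (Dl.of_Sg (hr.comp e)).not
  obtain ⟨f, hf, hf'⟩ := Cf.exists_find h1 (fun x => by
    obtain ⟨y, hy⟩ := h x
    obtain ⟨z, hz⟩ := (hr' _).1 hy
    exact ⟨Nat.pair y z, by simpa using hz⟩)
  exact ⟨fun x => (f x).unpair.1, hf.left, fun x => (hr' _).2 ⟨_, (hf' x).1⟩⟩

/-- Skolem functions: if `ρ` is Δ and `∃ y, ρ` is Δ. -/
theorem Cf.skolem {ρ : α × ℕ → Prop} (hρ : Dl n ρ) (h : Dl n (fun x => ∃ y, ρ (x, y))) :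
    ∃ f : α → ℕ, Cf n f ∧ ∀ x, (∃ y, ρ (x, y)) → ρ (x, f x) := by
  have h1 : Dl n (fun z : α × ℕ => (∃ y, ρ (z.1, y)) → ρ z) :=
    Dl.imp ⟨h.1.comp Computable.fst, Sg.comp (p := fun x => ¬ ∃ y, ρ (x, y)) h.2 Computable.fst⟩ hρ
  obtain ⟨f, hf, hf'⟩ := Cf.uniformize h1.1 (fun x => by
    by_cases H : ∃ y, ρ (x, y)
    · exact ⟨H.choose, fun _ => H.choose_spec⟩
    · exact ⟨0, fun H' => (H H').elim⟩)
  exact ⟨f, hf, hf'⟩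

theorem Cf.tabulate {f : α × ℕ → ℕ} (hf : Cf n f) :
    Cf n (fun z : α × ℕ => (List.range z.2).map fun i => f (z.1, i)) := by
  have h1 : Sg (n + 1) (((α × ℕ) × List ℕ) × ℕ) (fun z => f (z.1.1.1, z.2) = z.1.2.getD z.2 0) :=
    Sg.comp (f := fun z : ((α × ℕ) × List ℕ) × ℕ => ((z.1.1.1, z.2), z.1.2.getD z.2 0)) hf
      (((Computable.fst.comp (Computable.fst.comp Computable.fst)).pair Computable.snd).pair
        (comp_getD (Computable.snd.comp Computable.fst) Computable.snd))
  have h2 : Sg (n + 1) ((α × ℕ) × List ℕ) (fun z => z.2.length = z.1.2 ∧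
      ∀ i < z.1.2, f (z.1.1, i) = z.2.getD i 0) :=
    (Sg.eq (Computable.list_length.comp Computable.snd) (Computable.snd.comp Computable.fst)).and
      (Sg.ball h1 (Computable.snd.comp Computable.fst))
  refine h2.of_iff fun z => ?_
  obtain ⟨⟨x, B⟩, l⟩ := z
  dsimp only
  constructor
  · rintro rfl
    refine ⟨by simp, fun i hi => by
      have hi : i < B := hi
      simp [List.getD_eq_getElem?_getD, hi]⟩
  · rintro ⟨h3, h4⟩
    refine List.ext_getElem (by simp [h3]) fun i hi hi' => ?_
    have := h4 i (by omega)
    simp [this, hi']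

theorem primrec_list_sum : Primrec (fun l : List ℕ => l.sum) := by
  have : Primrec (fun l : List ℕ => l.foldr (fun a s => a + s) 0) :=
    Primrec.list_foldr (f := fun l : List ℕ => l) (g := fun _ => 0)
      (h := fun (_ : List ℕ) (z : ℕ × ℕ) => z.1 + z.2) Primrec.id (Primrec.const 0)
      (Primrec.nat_add.comp (Primrec.fst.comp Primrec.snd) (Primrec.snd.comp Primrec.snd))
  exact this.of_eq fun l => rfl

theorem Cf.sum [Inhabited α] {f : α × ℕ → ℕ} (hf : Cf n f) {b : α → ℕ} (hb : Cf n b) :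
    Cf n (fun x => ∑ i ∈ Finset.range (b x), f (x, i)) := by
  have h := Cf.comp1 (F := fun l : List ℕ => l.sum) primrec_list_sum.to_comp
    (Cf.comp (g := fun z : α × ℕ => (List.range z.2).map fun i => f (z.1, i))
      (f := fun x => (x, b x)) hf.tabulate (Cf.id.pair hb))
  refine h.of_eq fun x => ?_
  simp [Finset.sum, Finset.range, Multiset.range]

open Classical in
theorem Cf.count [Inhabited α] {p : α × ℕ → Prop} (hp : Dl n p) {b : α → ℕ} (hb : Cf n b) :
    Cf n (fun x => ((Finset.range (b x)).filter fun y => p (x, y)).card) := by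
  have h := Cf.sum (f := fun z => if p z then 1 else 0) (Cf.ite hp (Cf.const 1) (Cf.const 0)) hb
  exact h.of_eq fun x => by simp

/-- Finitely many functions combined in a list. -/
theorem Cf.list {k : ℕ} {f : Fin k → α → ℕ} (hf : ∀ i, Cf n (f i)) :
    Cf n (fun x => List.ofFn fun i => f i x) := by
  induction k with
  | zero => exact (Cf.const []).of_eq fun x => by simp
  | succ k ih =>
    exact (Cf.comp2 (F := fun (a : ℕ) (l : List ℕ) => a :: l) Primrec.list_cons.to_comp (hf 0)
      (ih fun i => hf i.succ)).of_eq fun x => by simp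

end AH


namespace AH

theorem Sg.partrec {p : ℕ → Prop} (hp : Sg 1 ℕ p) :
    ∃ f : ℕ →. ℕ, Nat.Partrec f ∧ ∀ x, p x ↔ ∃ y, y ∈ f x := by
  obtain ⟨r, hr, h⟩ := hp
  obtain ⟨g, hg, hg'⟩ := compPred_iff.1 hr.comp_not
  refine ⟨fun x => Nat.rfind fun y => Part.some (g (x, y)),
    Partrec.nat_iff.1 (Partrec.rfind (p := fun x y => Part.some (g (x, y))) hg), fun x => ?_⟩
  rw [h]
  simp only [hg', ← Part.dom_iff_mem]
  constructor
  · rintro ⟨y, hy⟩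
    exact ⟨y, by simp [hy], fun _ _ => trivial⟩
  · rintro ⟨y, hy, -⟩
    exact ⟨y, by simpa using hy⟩

/-- universal predicates -/
def U : ℕ → ℕ → ℕ → Prop
  | 0, e, z => ¬ (Nat.Partrec.Code.evaln z.unpair.2 (Denumerable.ofNat Nat.Partrec.Code e) z.unpair.1).isSome
  | k + 1, e, x => ∃ y, ¬ U k e (Nat.pair x y)

theorem U_Sg (k : ℕ) : Sg k (ℕ × ℕ) (fun z => U k z.1 z.2) := by
  induction k with
  | zero =>
    refine Sg.comp_not (p := fun z : ℕ × ℕ => (Nat.Partrec.Code.evaln z.2.unpair.2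
      (Denumerable.ofNat Nat.Partrec.Code z.1) z.2.unpair.1).isSome = true) ?_
    refine compPred_iff.2 ⟨_, ?_, fun x => Iff.rfl⟩
    refine Primrec.to_comp ?_
    refine Primrec.option_isSome.comp ?_
    exact Nat.Partrec.Code.primrec_evaln.comp
      (((Primrec.snd.comp (Primrec.unpair.comp Primrec.snd)).pair
        ((Primrec.ofNat Nat.Partrec.Code).comp Primrec.fst)).pair
        (Primrec.fst.comp (Primrec.unpair.comp Primrec.snd)))
  | succ k ih =>
    refine ⟨fun z => U k z.1.1 (Nat.pair z.1.2 z.2), ?_, fun x => Iff.rfl⟩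
    exact Sg.comp (f := fun z : (ℕ × ℕ) × ℕ => (z.1.1, Nat.pair z.1.2 z.2)) ih
      ((Computable.fst.comp Computable.fst).pair
        (Primrec₂.natPair.to_comp.comp (Computable.snd.comp Computable.fst) Computable.snd))

theorem U_index (k : ℕ) : ∀ p : ℕ → Prop, Sg (k + 1) ℕ p → ∃ e, ∀ x, p x ↔ U (k + 1) e x := by
  induction k with
  | zero =>
    intro p hp
    obtain ⟨f, hf, h⟩ := hp.partrec
    obtain ⟨c, hc⟩ := Nat.Partrec.Code.exists_code.1 hf
    refine ⟨Encodable.encode c, fun x => ?_⟩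
    simp only [U, Denumerable.ofNat_encode, Nat.unpair_pair, not_not]
    rw [h, ← hc]
    simp only [Nat.Partrec.Code.evaln_complete, Option.isSome_iff_exists]
    exact exists_comm
  | succ k ih =>
    intro p hp
    obtain ⟨r, hr, h⟩ := hp
    obtain ⟨e, he⟩ := ih (fun z => r z.unpair) (hr.comp Computable.unpair)
    refine ⟨e, fun x => ?_⟩
    rw [h]
    show _ ↔ ∃ y, ¬ U (k + 1) e (Nat.pair x y)
    simp [← he]

theorem Cf.index {n : ℕ} {f : ℕ → ℕ} (hf : Cf n f) :
    ∃ e, ∀ x y, f x = y ↔ ∃ s, ¬ U n e (Nat.pair (Nat.pair x y) s) := by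
  obtain ⟨e, he⟩ := U_index n (fun z => f z.unpair.1 = z.unpair.2)
    (Sg.comp (f := Nat.unpair) hf Computable.unpair)
  refine ⟨e, fun x y => ?_⟩
  have := he (Nat.pair x y)
  simp only [Nat.unpair_pair] at this
  exact this

theorem exists_enum (n : ℕ) : ∃ F : ℕ → ℕ → ℕ, (∀ i, Cf n (F i)) ∧ ∀ f, Cf n f → ∃ i, F i = f := by
  have hc : Set.Countable {f : ℕ → ℕ | Cf n f} := by
    choose e he using fun f : {f : ℕ → ℕ | Cf n f} => Cf.index f.2
    refine Set.countable_coe_iff.1 (Function.Injective.countable (f := e) ?_)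
    intro f g h
    apply Subtype.ext
    funext x
    have h1 := (he f x _).1 rfl
    rw [h] at h1
    exact ((he g x _).2 h1).symm
  obtain ⟨F, hF⟩ := hc.exists_eq_range ⟨fun x => x, Cf.id⟩
  refine ⟨F, fun i => ?_, fun f hf => ?_⟩
  · have : F i ∈ {f : ℕ → ℕ | Cf n f} := hF ▸ ⟨i, rfl⟩
    exact this
  · have : f ∈ Set.range F := hF ▸ hf
    exact this

end AH


namespace AH
open Classical in
theorem step_one {n : ℕ} {b : ℕ → ℕ} (hb : Cf n b) {f : ℕ → ℕ} (hf : Cf n f) (s : ℕ)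
    (X : ℕ × ℕ → Prop) (hX : Dl n X)
    (hc : ∀ x, s ≤ x → (b x + 4) ^ (x - s) ≤ ((Finset.range ((b x + 4) ^ x)).filter fun y => X (x, y)).card) :
    ∃ X' : ℕ × ℕ → Prop, (Dl n X' ∧ ∀ x, s + 1 ≤ x → (b x + 4) ^ (x - (s + 1)) ≤
      ((Finset.range ((b x + 4) ^ x)).filter fun y => X' (x, y)).card) ∧
      (∀ z, X' z → X z) ∧ ∃ V : ℕ → ℕ, Cf n V ∧ ∀ x y, X' (x, y) →
        y ≠ f x ∧ min (f (Nat.pair x y)) (b x + 1) = V x := by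
  have hB : Cf n (fun x : ℕ => (b x + 4) ^ x) := (hb.add (Cf.const 4)).pow Cf.id
  let Y : (ℕ × ℕ) × ℕ → Prop := fun z => X (z.1.1, z.2) ∧ (z.2 ≠ f z.1.1 ∧
    min (f (Nat.pair z.1.1 z.2)) (b z.1.1 + 1) = z.1.2)
  have c1 : Cf n (fun z : (ℕ × ℕ) × ℕ => z.1.1) := Cf.fst.comp Cf.fst
  have c2 : Cf n (fun z : (ℕ × ℕ) × ℕ => z.1.2) := Cf.snd.comp Cf.fst
  have c3 : Cf n (fun z : (ℕ × ℕ) × ℕ => z.2) := Cf.snd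
  have hY : Dl n Y := by
    refine Dl.and (Dl.comp (f := fun z : (ℕ × ℕ) × ℕ => (z.1.1, z.2)) hX (c1.pair c3)) (Dl.and ?_ ?_)
    · exact (Dl.eq c3 (hf.comp c1)).not
    · exact Dl.eq ((hf.comp (c1.npair c3)).min ((hb.comp c1).add (Cf.const 1))) c2
  let R : ℕ × ℕ → Prop := fun z => s + 1 ≤ z.1 → (b z.1 + 4) ^ (z.1 - (s + 1)) ≤
      ((Finset.range ((b z.1 + 4) ^ z.1)).filter fun y => Y (z, y)).card
  have hR : Dl n R := by
    have d1 : Cf n (fun z : ℕ × ℕ => z.1) := Cf.fst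
    refine Dl.imp (Dl.le (Cf.const (s + 1)) d1) (Dl.le ?_ ?_)
    · exact ((hb.comp d1).add (Cf.const 4)).pow (d1.sub (Cf.const (s + 1)))
    · convert Cf.count hY (hB.comp d1)
  have htot : ∀ x, ∃ v, R (x, v) := by
    intro x
    by_cases hx : s + 1 ≤ x
    swap
    · exact ⟨0, fun h => (hx h).elim⟩
    have h1 := hc x (by omega)
    set S := (Finset.range ((b x + 4) ^ x)).filter fun y => X (x, y) with hS
    have h2 : S.card ≤ (S.erase (f x)).card + 1 := by
      have := Finset.pred_card_le_card_erase (s := S) (a := f x)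
      omega
    have h3 : (Finset.range (b x + 2)).card * (b x + 4) ^ (x - (s + 1)) ≤ (S.erase (f x)).card := by
      obtain ⟨j, rfl⟩ : ∃ j, x = s + 1 + j := ⟨x - (s + 1), by omega⟩
      have e1 : s + 1 + j - s = j + 1 := by omega
      have e2 : s + 1 + j - (s + 1) = j := by omega
      rw [e1, pow_succ] at h1
      rw [e2, Finset.card_range]
      have : 1 ≤ (b (s + 1 + j) + 4) ^ j := Nat.one_le_pow _ _ (by omega)
      nlinarith
    obtain ⟨v, -, hv⟩ := Finset.exists_le_card_fiber_of_mul_le_card_of_maps_to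
      (f := fun y => min (f (Nat.pair x y)) (b x + 1))
      (fun y hy => by simp) (by simp) h3
    refine ⟨v, fun _ => hv.trans (Finset.card_le_card ?_)⟩
    intro y hy
    simp only [Finset.mem_filter, Finset.mem_erase, hS, Y] at hy ⊢
    tauto
  obtain ⟨V, hV, hV'⟩ := Cf.uniformize hR.1 htot
  refine ⟨fun z => Y ((z.1, V z.1), z.2), ⟨?_, fun x hx => by convert hV' x hx⟩, fun z hz => hz.1, V, hV,
    fun x y h => h.2⟩
  exact Dl.comp (p := Y) (f := fun z : ℕ × ℕ => ((z.1, V z.1), z.2)) hY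
    ((Cf.fst.pair (hV.comp Cf.fst)).pair Cf.snd)

theorem step {n : ℕ} {b : ℕ → ℕ} (hb : Cf n b) :
    ∃ P : ℕ → ℕ, (∀ x, P x < (b x + 4) ^ x) ∧
      (∀ f, Cf n f → ∃ g, Cf n g ∧ ∃ s, ∀ x, s ≤ x → f (Nat.pair x (P x)) ≤ b x →
        f (Nat.pair x (P x)) = g x) ∧
      (∀ g, Cf n g → ∃ s, ∀ x, s ≤ x → P x ≠ g x) := by
  classical
  obtain ⟨F, hF, hF'⟩ := exists_enum n
  let I : ℕ → Type := fun s => {X : ℕ × ℕ → Prop // Dl n X ∧ ∀ x, s ≤ x → (b x + 4) ^ (x - s) ≤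
      ((Finset.range ((b x + 4) ^ x)).filter fun y => X (x, y)).card}
  have hst : ∀ s (X : I s), ∃ X' : I (s + 1), (∀ z, X'.1 z → X.1 z) ∧ ∃ V : ℕ → ℕ, Cf n V ∧
      ∀ x y, X'.1 (x, y) → y ≠ F s x ∧ min (F s (Nat.pair x y)) (b x + 1) = V x := by
    intro s X
    obtain ⟨X', h1, h2⟩ := step_one hb (hF s) s X.1 X.2.1 X.2.2
    exact ⟨⟨X', h1⟩, h2⟩
  choose nx hnx using hst
  let X : ∀ s, I s := fun s => Nat.rec (motive := I) ⟨fun _ => True, Dl.const True, fun x _ => by simp⟩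
    (fun s Y => nx s Y) s
  have hXs : ∀ s, X (s + 1) = nx s (X s) := fun s => rfl
  have hanti : ∀ s t, s ≤ t → ∀ z, (X t).1 z → (X s).1 z := by
    intro s t hst
    induction hst with
    | refl => exact fun z h => h
    | step _ ih => intro z hz; exact ih z ((hnx _ _).1 z (by rw [← hXs]; exact hz))
  have hne : ∀ x, ∃ y, y < (b x + 4) ^ x ∧ (X x).1 (x, y) := by
    intro x
    have := (X x).2.2 x le_rfl
    rw [Nat.sub_self, pow_zero] at this
    obtain ⟨y, hy⟩ := Finset.card_pos.1 (Nat.lt_of_lt_of_le Nat.zero_lt_one this)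
    rw [Finset.mem_filter, Finset.mem_range] at hy
    exact ⟨y, hy⟩
  choose P hP using hne
  refine ⟨P, fun x => (hP x).1, fun f hf => ?_, fun g hg => ?_⟩
  · obtain ⟨s, rfl⟩ := hF' f hf
    obtain ⟨-, V, hV, h⟩ := hnx s (X s)
    refine ⟨V, hV, s + 1, fun x hx hle => ?_⟩
    have := (h x (P x) (hanti (s + 1) x hx _ (hP x).2)).2
    omega
  · obtain ⟨s, rfl⟩ := hF' g hg
    obtain ⟨-, V, hV, h⟩ := hnx s (X s)
    exact ⟨s + 1, fun x hx => (h x (P x) (hanti (s + 1) x hx _ (hP x).2)).1⟩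

end AH


namespace AH
open Filter

/-- The chain of generic functions. -/
structure Chain (n : ℕ) where
  q : ℕ → ℕ → ℕ
  h : ℕ → ℕ → ℕ
  B : ℕ → ℕ → ℕ
  q_zero : ∀ m, q 0 m = m
  q_left : ∀ k m, (q (k + 1) m).unpair.1 = q k m
  h_Cf : ∀ k, Cf n (h k)
  B_Cf : ∀ k, Cf n (B k)
  q_right : ∀ k m, (q (k + 1) m).unpair.2 < B k (q k m)
  h_mono : ∀ k m, h k m ≤ h (k + 1) m
  h_cof : ∀ f, Cf n f → ∃ k, ∀ m, f m ≤ h k m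
  same : ∀ k f, Cf n f → ∃ g, Cf n g ∧ ∀ᶠ m in atTop, f (q (k + 1) m) ≤ h k m →
    f (q (k + 1) m) = g (q k m)
  new : ∀ k g, Cf n g → ∀ᶠ m in atTop, (q (k + 1) m).unpair.2 ≠ g (q k m)

theorem Cf.left_iter {n : ℕ} (k : ℕ) : Cf n (fun x : ℕ => (fun x : ℕ => x.unpair.1)^[k] x) := by
  induction k with
  | zero => exact Cf.id
  | succ k ih => exact (ih.left).of_eq fun x => by rw [Function.iterate_succ_apply']

theorem exists_chain (n : ℕ) : Nonempty (Chain n) := by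
  obtain ⟨F, hF, hF'⟩ := exists_enum n
  let h : ℕ → ℕ → ℕ := fun k m => ∑ i ∈ Finset.range (k + 1), F i m
  have hh : ∀ k, Cf n (h k) := by
    intro k
    induction k with
    | zero => exact (hF 0).of_eq fun x => by simp [h]
    | succ k ih => exact (ih.add (hF (k + 1))).of_eq fun x => by simp only [h]; rw [Finset.sum_range_succ _ (k + 1)]
  let b : ℕ → ℕ → ℕ := fun k x => h k ((fun x : ℕ => x.unpair.1)^[k] x)
  have hb : ∀ k, Cf n (b k) := fun k => (hh k).comp (Cf.left_iter k)
  choose P hP1 hP2 hP3 using fun k => step (hb k)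
  let q : ℕ → ℕ → ℕ := fun k m => Nat.rec (motive := fun _ => ℕ) m (fun k x => Nat.pair x (P k x)) k
  have hq : ∀ k m, q (k + 1) m = Nat.pair (q k m) (P k (q k m)) := fun k m => rfl
  have hql : ∀ k m, (q (k + 1) m).unpair.1 = q k m := fun k m => by rw [hq]; simp
  have hqi : ∀ k m, (fun x : ℕ => x.unpair.1)^[k] (q k m) = m := by
    intro k m
    induction k with
    | zero => rfl
    | succ k ih => rw [Function.iterate_succ_apply]; simp only [hql]; exact ih
  have hqm : ∀ k m, m ≤ q k m := by
    intro k m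
    induction k with
    | zero => exact le_rfl
    | succ k ih => rw [hq]; exact ih.trans (Nat.left_le_pair _ _)
  have hbq : ∀ k m, b k (q k m) = h k m := fun k m => by simp only [b, hqi]
  refine ⟨⟨q, h, fun k x => (b k x + 4) ^ x, fun m => rfl, hql, hh, fun k => ((hb k).add (Cf.const 4)).pow Cf.id,
    fun k m => by rw [hq]; simpa using hP1 k (q k m), ?_, ?_, ?_, ?_⟩⟩
  · intro k m
    simp only [h]; rw [Finset.sum_range_succ _ (k + 1)]; omega
  · intro f hf
    obtain ⟨i, rfl⟩ := hF' f hf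
    exact ⟨i, fun m => Finset.single_le_sum (f := fun i => F i m) (fun _ _ => Nat.zero_le _) (by simp)⟩
  · intro k f hf
    obtain ⟨g, hg, s, hs⟩ := hP2 k f hf
    refine ⟨g, hg, eventually_atTop.2 ⟨s, fun m hm hle => ?_⟩⟩
    rw [hq] at hle ⊢
    exact hs _ (hm.trans (hqm k m)) (by rw [hbq]; exact hle)
  · intro k g hg
    obtain ⟨s, hs⟩ := hP3 k g hg
    refine eventually_atTop.2 ⟨s, fun m hm => ?_⟩
    rw [hq, Nat.unpair_pair]
    exact hs _ (hm.trans (hqm k m))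

namespace Chain
variable {n : ℕ} (C : Chain n)

theorem h_mono' {k l : ℕ} (hkl : k ≤ l) (m : ℕ) : C.h k m ≤ C.h l m :=
  monotone_nat_of_le_succ (f := fun k => C.h k m) (fun k => C.h_mono k m) hkl

theorem lift {k K : ℕ} (hk : k ≤ K) {f : ℕ → ℕ} (hf : Cf n f) :
    ∃ f', Cf n f' ∧ ∀ m, f (C.q k m) = f' (C.q K m) := by
  induction hk with
  | refl => exact ⟨f, hf, fun _ => rfl⟩
  | step _ ih =>
    obtain ⟨g, hg, h⟩ := ih
    exact ⟨fun x => g x.unpair.1, hg.comp (Cf.left Cf.id), fun m => by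
      rw [h]; exact congrArg g (C.q_left _ m).symm⟩

theorem sameK {k K : ℕ} (hk : k ≤ K) : ∀ {f : ℕ → ℕ}, Cf n f → 
    ∃ g, Cf n g ∧ ∀ᶠ m in atTop, f (C.q K m) ≤ C.h k m → f (C.q K m) = g (C.q k m) := by
  induction hk with
  | refl => exact fun {f} hf => ⟨f, hf, Eventually.of_forall fun _ _ => rfl⟩
  | @step K hk ih =>
    intro f hf
    obtain ⟨g, hg, h⟩ := C.same K f hf
    obtain ⟨g', hg', h'⟩ := ih hg
    refine ⟨g', hg', ?_⟩
    filter_upwards [h, h'] with m h1 h2 hle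
    have e := h1 (hle.trans (C.h_mono' hk m))
    rw [e, h2 (e ▸ hle)]

theorem cof {K : ℕ} : ∀ {f : ℕ → ℕ}, Cf n f → ∃ g, Cf n g ∧ ∀ m, f (C.q K m) ≤ g m := by
  induction K with
  | zero => intro f hf; exact ⟨f, hf, fun m => by rw [C.q_zero]⟩
  | succ K ih =>
    intro f hf
    obtain ⟨g, hg, h⟩ := ih (f := fun x => ∑ i ∈ Finset.range (C.B K x), f (Nat.pair x i))
      (Cf.sum (f := fun z : ℕ × ℕ => f (Nat.pair z.1 z.2)) (hf.comp (Cf.fst.npair Cf.snd)) (C.B_Cf K))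
    refine ⟨g, hg, fun m => le_trans ?_ (h m)⟩
    have e : C.q (K + 1) m = Nat.pair (C.q K m) (C.q (K + 1) m).unpair.2 := by
      rw [← C.q_left K m, Nat.pair_unpair]
    rw [e]
    exact Finset.single_le_sum (f := fun i => f (Nat.pair (C.q K m) i)) (fun _ _ => Nat.zero_le _)
      (Finset.mem_range.2 (C.q_right K m))

theorem cofh {K : ℕ} {f : ℕ → ℕ} (hf : Cf n f) : ∃ k, ∀ m, f (C.q K m) ≤ C.h k m := by
  obtain ⟨g, hg, h⟩ := C.cof (K := K) hf
  obtain ⟨k, hk⟩ := C.h_cof g hg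
  exact ⟨k, fun m => (h m).trans (hk m)⟩

end Chain
end AH


namespace AH
open FirstOrder Language ArithFC

theorem sp_ind {α : Type} {S P : ∀ _ n : ℕ, lang.BoundedFormula α n → Prop}
    (s0 : ∀ m n φ, IsDelta0 n φ → S m n φ)
    (s1 : ∀ m n φ, PiFm m n φ → P m n φ → S (m + 1) n φ)
    (s2 : ∀ m n φ, SigmaFm (m + 1) (n + 1) φ → S (m + 1) (n + 1) φ → S (m + 1) n φ.ex)
    (p0 : ∀ m n φ, IsDelta0 n φ → P m n φ)
    (p1 : ∀ m n φ, SigmaFm m n φ → S m n φ → P (m + 1) n φ)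
    (p2 : ∀ m n φ, PiFm (m + 1) (n + 1) φ → P (m + 1) (n + 1) φ → P (m + 1) n φ.all) :
    (∀ m n φ, SigmaFm m n φ → S m n φ) ∧ (∀ m n φ, PiFm m n φ → P m n φ) := by
  constructor
  · intro m n φ h
    exact SigmaFm.rec (motive_1 := fun m n φ _ => S m n φ) (motive_2 := fun m n φ _ => P m n φ)
      (fun m n {φ} h => s0 m n φ h) (fun m n {φ} h h' => s1 m n φ h h')
      (fun m n {φ} h h' => s2 m n φ h h') (fun m n {φ} h => p0 m n φ h)
      (fun m n {φ} h h' => p1 m n φ h h') (fun m n {φ} h h' => p2 m n φ h h') h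
  · intro m n φ h
    exact PiFm.rec (motive_1 := fun m n φ _ => S m n φ) (motive_2 := fun m n φ _ => P m n φ)
      (fun m n {φ} h => s0 m n φ h) (fun m n {φ} h h' => s1 m n φ h h')
      (fun m n {φ} h h' => s2 m n φ h h') (fun m n {φ} h => p0 m n φ h)
      (fun m n {φ} h h' => p1 m n φ h h') (fun m n {φ} h h' => p2 m n φ h h') h

/-- natural numbers, as a type synonym carrying the `lang`-structure -/
def NN : Type := ℕ

def natFun : ∀ {k : ℕ}, Func k → (Fin k → ℕ) → ℕ
  | _, Func.zero, _ => 0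
  | _, Func.one, _ => 1
  | _, Func.add, x => x 0 + x 1
  | _, Func.mul, x => x 0 * x 1

def natRel : ∀ {k : ℕ}, Rel k → (Fin k → ℕ) → Prop
  | _, Rel.lt, x => x 0 < x 1

instance : lang.Structure NN where
  funMap := fun f x => natFun f x
  RelMap := fun r x => natRel r x

section gen
variable {M : Type} [lang.Structure M] {α : Type}

theorem realize_ltFm {n : ℕ} (t u : lang.Term (α ⊕ Fin n)) (v : α → M) (xs : Fin n → M) :
    (ltFm t u).Realize v xs ↔ t.realize (Sum.elim v xs) < u.realize (Sum.elim v xs) := by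
  show Structure.RelMap (L := lang) Rel.lt (fun i => (![t, u] i).realize (Sum.elim v xs)) ↔
    Structure.RelMap (L := lang) Rel.lt _
  refine iff_of_eq (congrArg _ ?_)
  funext i
  fin_cases i <;> rfl

theorem realize_lift {n : ℕ} (t : lang.Term (α ⊕ Fin n)) (v : α → M) (xs : Fin n → M) (y : M) :
    (t.liftAt 1 n).realize (Sum.elim v (Fin.snoc xs y : Fin (n + 1) → M)) = t.realize (Sum.elim v xs) := by
  rw [Term.realize_liftAt]
  congr 1
  funext i
  rcases i with a | i
  · rfl
  · simp only [Function.comp, Sum.map_inr, Sum.elim_inr, i.2, if_true]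
    exact Fin.snoc_castSucc (α := fun _ => M) y xs i

theorem realize_bd {n : ℕ} (t : lang.Term (α ⊕ Fin n)) (v : α → M) (xs : Fin n → M) (y : M) :
    (ltFm (Term.var (Sum.inr (Fin.last n))) (t.liftAt 1 n)).Realize v (Fin.snoc xs y : Fin (n + 1) → M) ↔
      y < t.realize (Sum.elim v xs) := by
  rw [realize_ltFm, realize_lift]
  simp

end gen

/-- value of a term in the standard model -/
def Tv {α : Type} (t : lang.Term α) (c : α → ℕ) : ℕ := t.realize (M := NN) c

/-- truth of a formula in the standard model -/
def Rz {α : Type} {l : ℕ} (φ : lang.BoundedFormula α l) (v : α → ℕ) (xs : Fin l → ℕ) : Prop :=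
  φ.Realize (M := NN) v xs

section
variable {α : Type} {l : ℕ} (v : α → ℕ) (xs : Fin l → ℕ)

theorem Rz_falsum : ¬ Rz (BoundedFormula.falsum (L := lang) (α := α) (n := l)) v xs := fun h => h
theorem Rz_equal (t u : lang.Term (α ⊕ Fin l)) :
    Rz (BoundedFormula.equal t u) v xs ↔ Tv t (Sum.elim v xs) = Tv u (Sum.elim v xs) := Iff.rfl
theorem Rz_rel (R : lang.Relations 2) (ts : Fin 2 → lang.Term (α ⊕ Fin l)) :
    Rz (BoundedFormula.rel R ts) v xs ↔ Tv (ts 0) (Sum.elim v xs) < Tv (ts 1) (Sum.elim v xs) := by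
  cases R; exact Iff.rfl
theorem Rz_imp (φ ψ : lang.BoundedFormula α l) :
    Rz (φ.imp ψ) v xs ↔ (Rz φ v xs → Rz ψ v xs) := Iff.rfl
theorem Rz_not (φ : lang.BoundedFormula α l) :
    Rz φ.not v xs ↔ ¬ Rz φ v xs := Iff.rfl
theorem Rz_all (φ : lang.BoundedFormula α (l + 1)) :
    Rz φ.all v xs ↔ ∀ y : ℕ, Rz φ v (Fin.snoc xs y) := Iff.rfl
theorem Rz_ex (φ : lang.BoundedFormula α (l + 1)) :
    Rz φ.ex v xs ↔ ∃ y : ℕ, Rz φ v (Fin.snoc xs y) := BoundedFormula.realize_ex (M := NN)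
theorem Rz_bdAll (t : lang.Term (α ⊕ Fin l)) (φ : lang.BoundedFormula α (l + 1)) :
    Rz (BoundedFormula.all ((ltFm (Term.var (Sum.inr (Fin.last l))) (t.liftAt 1 l)).imp φ)) v xs ↔
      ∀ y < Tv t (Sum.elim v xs), Rz φ v (Fin.snoc xs y) := by
  rw [Rz_all]
  refine forall_congr' fun y => ?_
  rw [Rz_imp]
  exact imp_congr (realize_bd (M := NN) t v xs y) Iff.rfl
end

section
variable {X : Type} [Primcodable X] {α : Type}

/-- Coordinates: a family of maps to ℕ regarded as valuations -/
theorem comp_term (t : lang.Term α) (c : α → X → ℕ) (hc : ∀ a, Computable (c a)) :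
    Computable (fun x => Tv t (fun a => c a x)) := by
  induction t with
  | var a => exact hc a
  | @func l f ts ih =>
    cases f with
    | zero => exact Computable.const 0
    | one => exact Computable.const 1
    | add => exact Primrec.nat_add.to_comp.comp (ih 0) (ih 1)
    | mul => exact Primrec.nat_mul.to_comp.comp (ih 0) (ih 1)

theorem comp_snoc {l : ℕ} (c : Fin l → X → ℕ) (hc : ∀ a, Computable (c a)) (i : Fin (l + 1)) :
    Computable (fun z : X × ℕ => (Fin.snoc (fun i => c i z.1) z.2 : Fin (l + 1) → ℕ) i) := by
  refine Fin.lastCases ?_ (fun j => ?_) i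
  · simpa using Computable.snd
  · simpa using (hc j).comp Computable.fst

theorem comp_elim {l : ℕ} (v : α → X → ℕ) (c : Fin l → X → ℕ) (hv : ∀ a, Computable (v a)) (hc : ∀ a, Computable (c a))
    (t : lang.Term (α ⊕ Fin l)) :
    Computable (fun x => Tv t (Sum.elim (fun a => v a x) (fun i => c i x))) := by
  have := comp_term t (Sum.elim v c) (fun a => by rcases a with a | a; exact hv a; exact hc a)
  refine this.of_eq fun x => ?_
  congr 1
  funext a
  rcases a with a | a <;> rfl

/-- `φ` is of class `Q` under all computable coordinates. -/
def CFm (Q : ∀ (X : Type) [Primcodable X], (X → Prop) → Prop) {l : ℕ} (φ : lang.BoundedFormula α l) : Prop :=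
  ∀ (X : Type) [Primcodable X] (v : α → X → ℕ) (c : Fin l → X → ℕ), (∀ a, Computable (v a)) →
    (∀ a, Computable (c a)) → Q X (fun x => Rz φ (fun a => v a x) (fun i => c i x))

theorem CFm.snoc {Q : ∀ (X : Type) [Primcodable X], (X → Prop) → Prop} {l : ℕ}
    {φ : lang.BoundedFormula α (l + 1)} (h : CFm Q φ) (v : α → X → ℕ) (c : Fin l → X → ℕ) (hv : ∀ a, Computable (v a))
    (hc : ∀ a, Computable (c a)) : Q (X × ℕ) (fun z => Rz φ (fun a => v a z.1)
      (Fin.snoc (fun i => c i z.1) z.2 : Fin (l + 1) → ℕ)) :=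
  h (X × ℕ) (fun a z => v a z.1) (fun i z => (Fin.snoc (fun i => c i z.1) z.2 : Fin (l + 1) → ℕ) i)
    (fun a => (hv a).comp Computable.fst) (fun i => comp_snoc c hc i)

theorem delta0_comp {l : ℕ} {φ : lang.BoundedFormula α l} (h : IsDelta0 l φ) :
    CFm (fun X _ p => Sg 0 X p) φ := by
  induction h with
  | falsum n =>
    intro X _ v c hv hc
    exact (Sg.eq (Computable.const 0) (Computable.const 1)).of_iff fun x => by
      simp [Rz_falsum]
  | equal n t u =>
    intro X _ v c hv hc
    exact (Sg.eq (comp_elim v c hv hc t) (comp_elim v c hv hc u)).of_iff fun x => Rz_equal _ _ _ _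
  | rel n l R ts =>
    intro X _ v c hv hc
    cases R
    exact (Sg.lt (comp_elim v c hv hc (ts 0)) (comp_elim v c hv hc (ts 1))).of_iff fun x => Rz_rel _ _ _ _
  | imp n h1 h2 ih1 ih2 =>
    intro X _ v c hv hc
    exact ((ih1 X v c hv hc).comp_not.or (ih2 X v c hv hc)).of_iff fun x => by
      rw [Rz_imp]; tauto
  | bdAll n t h ih =>
    intro X _ v c hv hc
    refine (Sg.ball (ih.snoc v c hv hc) (comp_elim v c hv hc t)).of_iff fun x => ?_
    rw [Rz_bdAll]

theorem sigma_pi_Sg :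
    (∀ m n (φ : lang.BoundedFormula α n), SigmaFm m n φ → CFm (fun X _ p => Sg m X p) φ) ∧
    (∀ m n (φ : lang.BoundedFormula α n), PiFm m n φ → CFm (fun X _ p => Sg m X (fun x => ¬ p x)) φ) := by
  refine sp_ind (S := fun m n φ => CFm (fun X _ p => Sg m X p) φ)
    (P := fun m n φ => CFm (fun X _ p => Sg m X (fun x => ¬ p x)) φ) ?_ ?_ ?_ ?_ ?_ ?_
  · intro m n φ h X _ v c hv hc
    exact Sg.mono (Nat.zero_le m) (delta0_comp h X v c hv hc)
  · intro m n φ _ h X _ v c hv hc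
    exact (h X v c hv hc).of_not
  · intro m n φ _ h X _ v c hv hc
    refine (Sg.ex (h.snoc v c hv hc)).of_iff fun x => ?_
    rw [Rz_ex]
  · intro m n φ h X _ v c hv hc
    exact Sg.mono (Nat.zero_le m) (delta0_comp h X v c hv hc).comp_not
  · intro m n φ _ h X _ v c hv hc
    exact (h X v c hv hc).not
  · intro m n φ _ h X _ v c hv hc
    refine (Sg.ex (h.snoc v c hv hc)).of_iff fun x => ?_
    dsimp only
    rw [Rz_all]
    push Not
    rfl

/-- transfer from computable coordinates to `Cf` coordinates -/
theorem cf_coords [Finite α] {n l : ℕ} (φ : lang.BoundedFormula α l)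
    (v : α → X → ℕ) (c : Fin l → X → ℕ) (hv : ∀ a, Cf n (v a)) (hc : ∀ a, Cf n (c a)) :
    ∃ (p : ℕ) (e : α ≃ Fin p) (f : X → List ℕ × List ℕ), Cf n f ∧
      (∀ a, Computable (fun z : List ℕ × List ℕ => z.1.getD (e a) 0)) ∧
      (∀ i : Fin l, Computable (fun z : List ℕ × List ℕ => z.2.getD i 0)) ∧
      ∀ x, (Rz φ (fun a => v a x) (fun i => c i x) ↔
       Rz φ (fun a => (f x).1.getD (e a) 0) (fun i => (f x).2.getD i 0)) := by
  obtain ⟨p, ⟨e⟩⟩ := Finite.exists_equiv_fin α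
  refine ⟨p, e, fun x => (List.ofFn fun i => v (e.symm i) x, List.ofFn fun i => c i x),
    (Cf.list fun i => hv _).pair (Cf.list hc),
    fun a => comp_getD Computable.fst (Computable.const _),
    fun a => comp_getD Computable.snd (Computable.const _), fun x => ?_⟩
  have e1 : (fun a => v a x) = (fun a => (List.ofFn fun i => v (e.symm i) x).getD (e a) 0) := by
    funext a; simp [List.getD_eq_getElem?_getD]
  have e2 : (fun i => c i x) = (fun i : Fin l => (List.ofFn fun i => c i x).getD i 0) := by
    funext a; simp [List.getD_eq_getElem?_getD]
  simp only [← e1, ← e2]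

theorem sg_cf [Finite α] {n l : ℕ} {φ : lang.BoundedFormula α l} (h : CFm (fun X _ p => Sg (n + 1) X p) φ)
    {v : α → X → ℕ} {c : Fin l → X → ℕ} (hv : ∀ a, Cf n (v a)) (hc : ∀ a, Cf n (c a)) :
    Sg (n + 1) X (fun x => Rz φ (fun a => v a x) (fun i => c i x)) := by
  obtain ⟨p, e, f, hf, h1, h2, h3⟩ := cf_coords φ v c hv hc
  exact (Sg.compCf (h _ _ _ h1 h2) hf).of_iff h3

theorem dl_cf [Finite α] {n l : ℕ} {φ : lang.BoundedFormula α l} (h : CFm (fun _ _ p => Dl n p) φ)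
    {v : α → X → ℕ} {c : Fin l → X → ℕ} (hv : ∀ a, Cf n (v a)) (hc : ∀ a, Cf n (c a)) :
    Dl n (fun x => Rz φ (fun a => v a x) (fun i => c i x)) := by
  obtain ⟨p, e, f, hf, h1, h2, h3⟩ := cf_coords φ v c hv hc
  exact (Dl.comp (h _ _ _ h1 h2) hf).of_iff h3

theorem delta0_Dl {n l : ℕ} {φ : lang.BoundedFormula α l} (h : IsDelta0 l φ) :
    CFm (fun _ _ p => Dl n p) φ :=
  fun X _ v c hv hc => Dl.of_comp (delta0_comp h X v c hv hc)

theorem sigma_Dl {n m l : ℕ} (hm : m ≤ n) {φ : lang.BoundedFormula α l} (h : SigmaFm m l φ) :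
    CFm (fun _ _ p => Dl n p) φ :=
  fun X _ v c hv hc => Dl.of_Sg (Sg.mono hm (sigma_pi_Sg.1 _ _ _ h X v c hv hc))

theorem pi_Dl {n m l : ℕ} (hm : m ≤ n) {φ : lang.BoundedFormula α l} (h : PiFm m l φ) :
    CFm (fun _ _ p => Dl n p) φ :=
  fun X _ v c hv hc => (Dl.of_Sg (Sg.mono hm (sigma_pi_Sg.2 _ _ _ h X v c hv hc))).of_not

end
end AH


namespace AH
set_option linter.unusedSectionVars false
open FirstOrder Language ArithFC Filter

noncomputable abbrev UU : Filter ℕ := ((hyperfilter ℕ : Ultrafilter ℕ) : Filter ℕ)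

theorem UU_of_atTop {p : ℕ → Prop} (h : ∀ᶠ m in atTop, p m) : ∀ᶠ m in UU, p m :=
  Nat.hyperfilter_le_atTop h

theorem UU_not {p : ℕ → Prop} : (∀ᶠ m in UU, ¬ p m) ↔ ¬ ∀ᶠ m in UU, p m := Ultrafilter.eventually_not
theorem UU_imp {p q : ℕ → Prop} : (∀ᶠ m in UU, p m → q m) ↔ ((∀ᶠ m in UU, p m) → ∀ᶠ m in UU, q m) :=
  Ultrafilter.eventually_imp
theorem UU_or {p q : ℕ → Prop} : (∀ᶠ m in UU, p m ∨ q m) ↔ ((∀ᶠ m in UU, p m) ∨ ∀ᶠ m in UU, q m) :=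
  Ultrafilter.eventually_or

variable {n : ℕ} (C : Chain n)

/-- The functions generating the model. -/
def Fs : Type := {f : ℕ → ℕ // ∃ k g, Cf n g ∧ ∀ m, f m = g (C.q k m)}

def fsSetoid : Setoid (Fs C) where
  r f g := ∀ᶠ m in UU, f.1 m = g.1 m
  iseqv := ⟨fun f => Eventually.of_forall fun _ => rfl, fun h => h.mono fun _ h => h.symm,
    fun h1 h2 => by filter_upwards [h1, h2] with m e1 e2; rw [e1, e2]⟩

/-- The model. -/
def MN : Type := Quotient (fsSetoid C)

variable {C}

noncomputable def rep (x : MN C) (m : ℕ) : ℕ := (Quotient.out x).1 m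

def mkF (f : ℕ → ℕ) (hf : ∃ k g, Cf n g ∧ ∀ m, f m = g (C.q k m)) : MN C :=
  Quotient.mk (fsSetoid C) ⟨f, hf⟩

variable (C) in
def mkK (k : ℕ) (g : ℕ → ℕ) (hg : Cf n g) : MN C := mkF (fun m => g (C.q k m)) ⟨k, g, hg, fun _ => rfl⟩

theorem rep_mkF (f : ℕ → ℕ) (hf : ∃ k g, Cf n g ∧ ∀ m, f m = g (C.q k m)) :
    ∀ᶠ m in UU, rep (mkF f hf) m = f m :=
  Quotient.exact (s := fsSetoid C) (Quotient.out_eq (s := fsSetoid C) (mkF f hf))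

theorem rep_mkK (k : ℕ) (g : ℕ → ℕ) (hg : Cf n g) :
    ∀ᶠ m in UU, rep (mkK C k g hg) m = g (C.q k m) := rep_mkF _ _

theorem rep_mem (x : MN C) : ∃ k g, Cf n g ∧ ∀ m, rep x m = g (C.q k m) := (Quotient.out x).2

theorem eq_iff {x y : MN C} : x = y ↔ ∀ᶠ m in UU, rep x m = rep y m := by
  constructor
  · rintro rfl; exact Eventually.of_forall fun _ => rfl
  · intro h
    rw [← Quotient.out_eq (s := fsSetoid C) x, ← Quotient.out_eq (s := fsSetoid C) y]
    exact Quotient.sound (s := fsSetoid C) h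

theorem mkK_eq {k : ℕ} {g : ℕ → ℕ} {hg : Cf n g} {x : MN C} (h : ∀ᶠ m in UU, rep x m = g (C.q k m)) :
    mkK C k g hg = x := by
  rw [eq_iff]; filter_upwards [h, rep_mkK k g hg] with m h1 h2; rw [h1, h2]

/-- `x` belongs to the `k`-th submodel. -/
def InK (k : ℕ) (x : MN C) : Prop := ∃ g, Cf n g ∧ ∀ᶠ m in UU, rep x m = g (C.q k m)

theorem InK.mono {k K : ℕ} (h : k ≤ K) {x : MN C} (hx : InK k x) : InK K x := by
  obtain ⟨g, hg, hx⟩ := hx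
  obtain ⟨g', hg', h'⟩ := C.lift h hg
  exact ⟨g', hg', hx.mono fun m hm => by rw [hm, h']⟩

theorem mem_InK (x : MN C) : ∃ k, ∀ K ≥ k, InK K x := by
  obtain ⟨k, g, hg, h⟩ := rep_mem x
  exact ⟨k, fun K hK => InK.mono hK ⟨g, hg, Eventually.of_forall h⟩⟩

theorem mkK_InK (k : ℕ) (g : ℕ → ℕ) (hg : Cf n g) : InK k (mkK C k g hg) := ⟨g, hg, rep_mkK k g hg⟩

theorem common {ι : Type} [Finite ι] (v : ι → MN C) : ∃ k, ∀ K ≥ k, ∀ i, InK K (v i) := by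
  choose k hk using fun i => mem_InK (v i)
  obtain ⟨B, hB⟩ := (Set.finite_range k).bddAbove
  exact ⟨B, fun K hK i => hk i K ((hB ⟨i, rfl⟩).trans hK)⟩

theorem common_rep {ι : Type} [Finite ι] (v : ι → MN C) :
    ∃ k, ∀ i, ∃ g, Cf n g ∧ ∀ m, rep (v i) m = g (C.q k m) := by
  choose k g hg h using fun i => rep_mem (v i)
  obtain ⟨B, hB⟩ := (Set.finite_range k).bddAbove
  refine ⟨B, fun i => ?_⟩
  obtain ⟨g', hg', h'⟩ := C.lift (hB ⟨i, rfl⟩) (hg i)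
  exact ⟨g', hg', fun m => by rw [h, h']⟩

theorem Cf_natFun {l : ℕ} (f : Func l) (g : Fin l → ℕ → ℕ) (hg : ∀ i, Cf n (g i)) :
    Cf n (fun x => natFun f (fun i => g i x)) := by
  cases f with
  | zero => exact Cf.const 0
  | one => exact Cf.const 1
  | add => exact (hg 0).add (hg 1)
  | mul => exact (hg 0).mul (hg 1)

noncomputable instance : lang.Structure (MN C) where
  funMap := fun f x => mkF (fun m => natFun f (fun i => rep (x i) m)) (by
    obtain ⟨k, h⟩ := common_rep x
    choose g hg h using h
    exact ⟨k, _, Cf_natFun f g hg, fun m => by simp only [h]⟩)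
  RelMap := fun r x => ∀ᶠ m in UU, natRel r (fun i => rep (x i) m)

theorem rep_term {α : Type} [Finite α] (t : lang.Term α) (v : α → MN C) :
    ∀ᶠ m in UU, rep (t.realize v) m = Tv t (fun a => rep (v a) m) := by
  induction t with
  | var a => exact Eventually.of_forall fun _ => rfl
  | @func l f ts ih =>
    have h1 := rep_mkF (C := C) (fun m => natFun f (fun i => rep ((ts i).realize v) m)) (by
      obtain ⟨k, h⟩ := common_rep (fun i => (ts i).realize v)
      choose g hg h using h
      exact ⟨k, _, Cf_natFun f g hg, fun m => by simp only [h]⟩)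
    have h2 : ∀ᶠ m in UU, ∀ i, rep ((ts i).realize v) m = Tv (ts i) (fun a => rep (v a) m) :=
      eventually_all.2 ih
    filter_upwards [h1, h2] with m e1 e2
    refine Eq.trans (e1 : _) ?_
    simp only [e2]
    rfl

theorem lt_iff (x y : MN C) : x < y ↔ ∀ᶠ m in UU, rep x m < rep y m := Iff.rfl

theorem rep_add (x y : MN C) : ∀ᶠ m in UU, rep (x + y) m = rep x m + rep y m := rep_mkF _ _
theorem rep_mul (x y : MN C) : ∀ᶠ m in UU, rep (x * y) m = rep x m * rep y m := rep_mkF _ _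
theorem rep_zero : ∀ᶠ m in UU, rep (0 : MN C) m = 0 := rep_mkF _ _
theorem rep_one : ∀ᶠ m in UU, rep (1 : MN C) m = 1 := rep_mkF _ _

/-- valuations are evaluated pointwise -/
theorem elim_rep {α : Type} {l : ℕ} (v : α → MN C) (xs : Fin l → MN C) (m : ℕ) :
    (fun a => rep (Sum.elim v xs a) m) = Sum.elim (fun a => rep (v a) m) (fun i => rep (xs i) m) := by
  funext a; rcases a with a | a <;> rfl

theorem snoc_rep {l : ℕ} (xs : Fin l → MN C) (y : MN C) (m : ℕ) :
    (fun i => rep ((Fin.snoc xs y : Fin (l + 1) → MN C) i) m) =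
      (Fin.snoc (fun i => rep (xs i) m) (rep y m) : Fin (l + 1) → ℕ) := by
  funext i
  refine Fin.lastCases ?_ (fun j => ?_) i <;> simp

/-- Łoś property -/
def Los (C : Chain n) {α : Type} {l : ℕ} (φ : lang.BoundedFormula α l) : Prop :=
  ∀ (v : α → MN C) (xs : Fin l → MN C), φ.Realize v xs ↔
    ∀ᶠ m in UU, Rz φ (fun a => rep (v a) m) (fun i => rep (xs i) m)

variable {α : Type} [Finite α] {l : ℕ}

theorem Los.falsum : Los C (BoundedFormula.falsum (L := lang) (α := α) (n := l)) := by
  intro v xs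
  constructor
  · intro h; exact h.elim
  · intro h
    obtain ⟨m, hm⟩ := h.exists
    exact hm

theorem Los.equal (t u : lang.Term (α ⊕ Fin l)) : Los C (BoundedFormula.equal t u) := by
  intro v xs
  show t.realize (Sum.elim v xs) = u.realize (Sum.elim v xs) ↔ _
  rw [eq_iff]
  refine eventually_congr ?_
  filter_upwards [rep_term t (Sum.elim v xs), rep_term u (Sum.elim v xs)] with m h1 h2
  rw [Rz_equal, h1, h2, elim_rep]

theorem Los.rel {k : ℕ} (R : lang.Relations k) (ts : Fin k → lang.Term (α ⊕ Fin l)) :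
    Los C (BoundedFormula.rel R ts) := by
  intro v xs
  show (∀ᶠ m in UU, natRel R (fun i => rep ((ts i).realize (Sum.elim v xs)) m)) ↔ _
  refine eventually_congr ?_
  filter_upwards [eventually_all.2 (fun i => rep_term (ts i) (Sum.elim v xs))] with m h1
  simp only [h1, elim_rep]
  rfl

theorem Los.imp {φ ψ : lang.BoundedFormula α l} (h1 : Los C φ) (h2 : Los C ψ) : Los C (φ.imp ψ) := by
  intro v xs
  simp only [Rz_imp]
  rw [BoundedFormula.realize_imp, h1, h2, UU_imp]

theorem Los.not {φ : lang.BoundedFormula α l} (h1 : Los C φ) : Los C φ.not := h1.imp Los.falsum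

theorem common2 (v : α → MN C) (xs : Fin l → MN C) : ∃ k, ∃ (f : α → ℕ → ℕ) (g : Fin l → ℕ → ℕ),
    (∀ a, Cf n (f a)) ∧ (∀ i, Cf n (g i)) ∧ (∀ a m, rep (v a) m = f a (C.q k m)) ∧
    (∀ i m, rep (xs i) m = g i (C.q k m)) := by
  obtain ⟨k, h⟩ := common_rep (Sum.elim v xs)
  choose g hg h using h
  exact ⟨k, fun a => g (Sum.inl a), fun a => g (Sum.inr a), fun a => hg _, fun a => hg _, fun a m => h (Sum.inl a) m,
    fun a m => h (Sum.inr a) m⟩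

theorem Cf_snoc {X : Type} [Primcodable X] [Inhabited X] {g : Fin l → X → ℕ} (hg : ∀ i, Cf n (g i)) (i : Fin (l + 1)) :
    Cf n (fun z : X × ℕ => (Fin.snoc (fun i => g i z.1) z.2 : Fin (l + 1) → ℕ) i) := by
  refine Fin.lastCases ?_ (fun j => ?_) i
  · simpa using Cf.snd
  · simpa using (hg j).comp Cf.fst

theorem Los.all {φ : lang.BoundedFormula α (l + 1)} (h : Los C φ) (h1 : CFm (fun _ _ p => Dl n p) φ)
    (h2 : CFm (fun _ _ p => Dl n p) φ.all) : Los C φ.all := by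
  intro v xs
  rw [BoundedFormula.realize_all]
  constructor
  · intro H
    by_contra hcon
    rw [← UU_not] at hcon
    obtain ⟨k, f, g, hf, hg, ef, eg⟩ := common2 v xs
    simp only [ef, eg] at hcon
    have d1 : Dl n (fun z : ℕ × ℕ => ¬ Rz φ (fun a => f a z.1) (Fin.snoc (fun i => g i z.1) z.2 : Fin (l + 1) → ℕ)) :=
      (dl_cf h1 (v := fun a (z : ℕ × ℕ) => f a z.1) (c := fun i (z : ℕ × ℕ) => (Fin.snoc (fun i => g i z.1) z.2 : Fin (l + 1) → ℕ) i)
        (fun a => (hf a).comp Cf.fst) (fun i => Cf_snoc hg i)).not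
    have d2 := (dl_cf h2 hf hg).not
    simp only [Rz_all] at d2 hcon
    push Not at d2 hcon
    obtain ⟨s, hs, hs'⟩ := Cf.skolem d1 d2
    have := H (mkK C k s hs)
    rw [h] at this
    obtain ⟨m, hm1, hm2, hm3⟩ := (this.and (hcon.and (rep_mkK k s hs))).exists
    rw [snoc_rep, hm3] at hm1
    simp only [ef, eg] at hm1
    exact hs' _ hm2 hm1
  · intro H y
    rw [h]
    filter_upwards [H] with m hm
    rw [snoc_rep]
    exact hm _

theorem Los.ex {φ : lang.BoundedFormula α (l + 1)} (h : Los C φ) (h1 : CFm (fun _ _ p => Dl n p) φ)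
    (h2 : CFm (fun _ _ p => Dl n p) φ.ex) : Los C φ.ex := by
  refine Los.not (Los.all (Los.not h) ?_ ?_)
  · intro X _ v c hv hc
    exact (h1 X v c hv hc).not
  · intro X _ v c hv hc
    exact (h2 X v c hv hc).of_not

theorem Los.delta0 {φ : lang.BoundedFormula α l} (h : IsDelta0 l φ) : Los C φ := by
  induction h with
  | falsum => exact Los.falsum
  | equal => exact Los.equal _ _
  | rel => exact Los.rel _ _
  | imp n h1 h2 ih1 ih2 => exact Los.imp ih1 ih2
  | bdAll l t h ih =>
    refine Los.all (Los.imp (Los.rel _ _) ih) ?_ ?_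
    · exact delta0_Dl (IsDelta0.imp _ (IsDelta0.rel _ _ _ _) h)
    · exact delta0_Dl (IsDelta0.bdAll _ _ h)

theorem Los.sigma_pi : (∀ m l (φ : lang.BoundedFormula α l), SigmaFm m l φ → (m ≤ n → Los C φ)) ∧
    (∀ m l (φ : lang.BoundedFormula α l), PiFm m l φ → (m ≤ n → Los C φ)) := by
  refine sp_ind (S := fun m l φ => m ≤ n → Los C φ) (P := fun m l φ => m ≤ n → Los C φ) ?_ ?_ ?_ ?_ ?_ ?_
  · intro m l φ h _; exact Los.delta0 h
  · intro m l φ _ h hm; exact h (by omega)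
  · intro m l φ h ih hm
    exact Los.ex (ih hm) (sigma_Dl hm h) (sigma_Dl hm (SigmaFm.ex _ _ h))
  · intro m l φ h _; exact Los.delta0 h
  · intro m l φ _ h hm; exact h (by omega)
  · intro m l φ h ih hm
    exact Los.all (ih hm) (pi_Dl hm h) (pi_Dl hm (PiFm.all _ _ h))

end AH


namespace AH
set_option linter.unusedSectionVars false
open FirstOrder Language ArithFC Filter

variable {n : ℕ} {C : Chain n}

theorem le_iff (x y : MN C) : x ≤ y ↔ ∀ᶠ m in UU, rep x m ≤ rep y m := by
  show (x < y ∨ x = y) ↔ _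
  rw [lt_iff, eq_iff, ← UU_or]
  exact eventually_congr (Eventually.of_forall fun m => Nat.le_iff_lt_or_eq.symm)

theorem pam : PAm (MN C) where
  add_assoc x y z := by
    rw [eq_iff]
    filter_upwards [rep_add (x + y) z, rep_add x y, rep_add x (y + z), rep_add y z] with m h1 h2 h3 h4
    rw [h1, h2, h3, h4]; ring
  add_comm x y := by
    rw [eq_iff]
    filter_upwards [rep_add x y, rep_add y x] with m h1 h2
    rw [h1, h2]; ring
  mul_assoc x y z := by
    rw [eq_iff]
    filter_upwards [rep_mul (x * y) z, rep_mul x y, rep_mul x (y * z), rep_mul y z] with m h1 h2 h3 h4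
    rw [h1, h2, h3, h4]; ring
  mul_comm x y := by
    rw [eq_iff]
    filter_upwards [rep_mul x y, rep_mul y x] with m h1 h2
    rw [h1, h2]; ring
  ldistrib x y z := by
    rw [eq_iff]
    filter_upwards [rep_mul x (y + z), rep_add y z, rep_add (x * y) (x * z), rep_mul x y, rep_mul x z] with m h1 h2 h3 h4 h5
    rw [h1, h2, h3, h4, h5]; ring
  add_zero x := by
    rw [eq_iff]
    filter_upwards [rep_add x 0, rep_zero (C := C)] with m h1 h2
    rw [h1, h2]; rfl
  mul_zero x := by
    rw [eq_iff]
    filter_upwards [rep_mul x 0, rep_zero (C := C)] with m h1 h2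
    rw [h1, h2]; rfl
  mul_one x := by
    rw [eq_iff]
    filter_upwards [rep_mul x 1, rep_one (C := C)] with m h1 h2
    rw [h1, h2]; exact Nat.mul_one _
  lt_trans x y z h1 h2 := by
    rw [lt_iff] at *
    filter_upwards [h1, h2] with m h1 h2
    exact h1.trans h2
  lt_irrefl x h := by
    rw [lt_iff] at h
    obtain ⟨m, hm⟩ := h.exists
    exact lt_irrefl _ hm
  lt_total x y := by
    rw [lt_iff, lt_iff, eq_iff, ← UU_or, ← UU_or]
    exact Eventually.of_forall fun m => lt_trichotomy _ _
  add_lt_add x y z h := by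
    rw [lt_iff] at *
    filter_upwards [h, rep_add x z, rep_add y z] with m h h1 h2
    rw [h1, h2]; exact Nat.add_lt_add_right h _
  mul_lt_mul x y z h h' := by
    rw [lt_iff] at *
    filter_upwards [h, h', rep_zero (C := C), rep_mul x z, rep_mul y z] with m h h' h0 h1 h2
    rw [h0] at h'
    rw [h1, h2]; exact Nat.mul_lt_mul_of_pos_right h h'
  sub_exists x y h := by
    rw [lt_iff] at h
    obtain ⟨k, f, g, hf, hg, ef, eg⟩ := common2 (fun _ : Unit => x) (fun _ : Fin 1 => y)
    refine ⟨mkK C k (fun z => g 0 z - f () z) ((hg 0).sub (hf ())), ?_⟩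
    rw [eq_iff]
    filter_upwards [h, rep_add x (mkK C k (fun z => g 0 z - f () z) ((hg 0).sub (hf ()))),
      rep_mkK (C := C) k (fun z => g 0 z - f () z) ((hg 0).sub (hf ()))] with m h h1 h2
    rw [h1, h2, ← ef, ← eg]
    exact Nat.add_sub_of_le h.le
  zero_lt_one := by
    rw [lt_iff]
    filter_upwards [rep_zero (C := C), rep_one (C := C)] with m h1 h2
    rw [h1, h2]; exact Nat.zero_lt_one
  discrete x h := by
    rw [lt_iff] at h
    rw [le_iff]
    filter_upwards [h, rep_zero (C := C), rep_one (C := C)] with m h h1 h2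
    rw [h1] at h
    rw [h2]; exact h
  zero_le x := by
    rw [le_iff]
    filter_upwards [rep_zero (C := C)] with m h1
    rw [h1]; exact Nat.zero_le _

theorem isig : ISig n (MN C) := by
  intro A hA h0 hs x
  obtain ⟨p, φ, w, hφ, hR⟩ := hA
  have hA' : ∀ y, y ∈ A ↔ φ.Realize (Sum.elim (fun _ => y) w) finZeroElim := fun y => hR (fun _ => y)
  by_contra hx
  have hl : Los C φ := Los.sigma_pi.1 _ _ _ hφ le_rfl
  obtain ⟨k, f, g, hf, hg, ef, eg⟩ := common2 (Sum.elim (fun _ : Fin 1 => x) w) (finZeroElim : Fin 0 → MN C)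
  have ew : ∀ i m, rep (w i) m = f (Sum.inr i) (C.q k m) := fun i m => ef (Sum.inr i) m
  have ex : ∀ m, rep x m = f (Sum.inl 0) (C.q k m) := fun m => ef (Sum.inl 0) m
  let T : ℕ → ℕ → Prop := fun z y => Rz φ (Sum.elim (fun _ => y) (fun i => f (Sum.inr i) z)) finZeroElim
  have key : ∀ y, y ∈ A ↔ ∀ᶠ m in UU, T (C.q k m) (rep y m) := by
    intro y
    rw [hA', hl]
    refine eventually_congr (Eventually.of_forall fun m => ?_)
    have e1 : (fun a => rep (Sum.elim (fun _ : Fin 1 => y) w a) m) =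
      Sum.elim (fun _ => rep y m) (fun i => f (Sum.inr i) (C.q k m)) := by
      funext a; rcases a with a | a
      · rfl
      · exact ew a m
    have e2 : (fun i => rep ((finZeroElim : Fin 0 → MN C) i) m) = (finZeroElim : Fin 0 → ℕ) := by
      funext i; exact i.elim0
    rw [e1, e2]
  have hT : Dl n (fun z : ℕ × ℕ => T z.1 z.2) := by
    have := dl_cf (sigma_Dl le_rfl hφ) (X := ℕ × ℕ) (n := n)
      (v := fun a z => Sum.elim (fun _ => z.2) (fun i => f (Sum.inr i) z.1) a)
      (c := (finZeroElim : Fin 0 → ℕ × ℕ → ℕ)) (fun a => by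
        rcases a with a | a
        · exact Cf.snd
        · exact (hf _).comp Cf.fst) (fun a => a.elim0)
    refine this.of_iff fun z => ?_
    have e2 : (fun i => (finZeroElim : Fin 0 → ℕ × ℕ → ℕ) i z) = (finZeroElim : Fin 0 → ℕ) := by
      funext i; exact i.elim0
    rw [e2]
  obtain ⟨s, hsC, hs1⟩ := Cf.exists_find (ρ := fun z : ℕ × ℕ => ¬ T z.1 z.2 ∨ z.2 = f (Sum.inl 0) z.1)
    (hT.not.or (Dl.eq Cf.snd ((hf _).comp Cf.fst))) (fun z => ⟨_, Or.inr rfl⟩)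
  have hy : mkK C k s hsC ∉ A := by
    rw [key, ← UU_not] at hx ⊢
    filter_upwards [hx, rep_mkK k s hsC] with m h1 h2
    rw [h2]
    rw [ex] at h1
    rcases (hs1 (C.q k m)).1 with h3 | h3
    · exact h3
    · dsimp only at h3
      rw [h3]; exact h1
  have hs0 : ∀ᶠ m in UU, s (C.q k m) ≠ 0 := by
    rw [UU_not]
    intro h
    apply hy
    have : mkK C k s hsC = 0 := by
      rw [eq_iff]
      filter_upwards [h, rep_mkK k s hsC, rep_zero (C := C)] with m h1 h2 h3
      rw [h2, h3, h1]
    rw [this]; exact h0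
  have hp : Cf n (fun z => s z - 1) := hsC.sub (Cf.const 1)
  have h1 : mkK C k _ hp + 1 = mkK C k s hsC := by
    rw [eq_iff]
    filter_upwards [hs0, rep_add (mkK C k _ hp) 1, rep_mkK k s hsC, rep_mkK k _ hp, rep_one (C := C)] with m h0 h1 h2 h3 h4
    rw [h1, h2, h3, h4]; omega
  apply hy
  rw [← h1]
  apply hs
  rw [key]
  filter_upwards [hs0, rep_mkK k _ hp] with m h0 h3
  rw [h3]
  have := (hs1 (C.q k m)).2 (s (C.q k m) - 1) (by omega)
  dsimp only at this
  tauto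

theorem InK.of_le {k : ℕ} {x : MN C} (h : ∀ᶠ m in UU, rep x m ≤ C.h k m) : InK k x := by
  obtain ⟨K, hK⟩ := mem_InK x
  obtain ⟨f, hf, e⟩ := hK (max k K) (le_max_right _ _)
  obtain ⟨g, hg, hg'⟩ := C.sameK (le_max_left k K) hf
  refine ⟨g, hg, ?_⟩
  filter_upwards [h, e, UU_of_atTop hg'] with m h1 h2 h3
  rw [h2] at h1 ⊢
  exact h3 h1

theorem exists_h (x : MN C) : ∃ k, ∀ K ≥ k, ∀ᶠ m in UU, rep x m ≤ C.h K m := by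
  obtain ⟨k, g, hg, h⟩ := rep_mem x
  obtain ⟨k', hk'⟩ := C.cofh (K := k) hg
  exact ⟨k', fun K hK => Eventually.of_forall fun m => by
    rw [h]; exact (hk' m).trans (C.h_mono' hK m)⟩

theorem exists_new (k : ℕ) : ∃ x : MN C, ¬ InK k x := by
  refine ⟨mkK C (k + 1) (fun z => z.unpair.2) (Cf.right Cf.id), ?_⟩
  rintro ⟨g, hg, h⟩
  obtain ⟨m, h1, h2, h3⟩ := (h.and ((rep_mkK (C := C) (k + 1) (fun z => z.unpair.2) (Cf.right Cf.id)).and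
    (UU_of_atTop (C.new k g hg)))).exists
  exact h3 (h2.symm.trans h1)

theorem bounded_descent {σ : ℕ × ℕ → Prop} (hσ : Dl n σ) {k K : ℕ} {e : ℕ → ℕ} (he : Cf n e)
    (h : ∀ᶠ m in UU, σ (C.q k m, e (C.q K m))) : ∃ s, Cf n s ∧ ∀ᶠ m in UU, σ (C.q k m, s (C.q k m)) := by
  obtain ⟨g, hg, hb⟩ := C.cof (K := K) he
  obtain ⟨g', hg', hb'⟩ := C.lift (Nat.zero_le k) hg
  obtain ⟨s, hs, hs'⟩ := Cf.exists_find (ρ := fun z : ℕ × ℕ => σ z ∨ g' z.1 < z.2)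
    (hσ.or (Dl.lt (hg'.comp Cf.fst) Cf.snd)) (fun z => ⟨g' z + 1, Or.inr (Nat.lt_succ_self _)⟩)
  refine ⟨s, hs, ?_⟩
  filter_upwards [h] with m hm
  have h1 := hs' (C.q k m)
  rcases h1.1 with h2 | h2
  · exact h2
  · exfalso
    have h3 : e (C.q K m) ≤ g' (C.q k m) := by rw [← hb', C.q_zero]; exact hb m
    exact h1.2 _ (h3.trans_lt h2) (Or.inl hm)

variable {α : Type} [Finite α] {l : ℕ}

/-- descent property -/
def Desc (C : Chain n) (k : ℕ) (φ : lang.BoundedFormula α l) : Prop :=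
  ∀ (v : α → MN C) (xs : Fin l → MN C), φ.Realize v xs → ∃ v' xs', (∀ a, InK k (v' a)) ∧
    (∀ i, InK k (xs' i)) ∧ (∀ a, InK k (v a) → v' a = v a) ∧ (∀ i, InK k (xs i) → xs' i = xs i) ∧
    φ.Realize v' xs'

theorem Desc.base {k : ℕ} {φ : lang.BoundedFormula α l} (h : Los C φ) (h1 : CFm (fun _ _ p => Dl n p) φ) :
    Desc C k φ := by
  classical
  intro v xs H
  rw [h] at H
  let u : α ⊕ Fin l → MN C := Sum.elim v xs
  obtain ⟨K, hK⟩ := common_rep u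
  choose f hf ef using hK
  have hfix : ∀ a, ∃ g, Cf n g ∧ (InK k (u a) → ∀ᶠ m in UU, rep (u a) m = g (C.q k m)) := by
    intro a
    by_cases ha : InK k (u a)
    · obtain ⟨g, hg, h⟩ := ha; exact ⟨g, hg, fun _ => h⟩
    · exact ⟨_, Cf.id, fun h => (ha h).elim⟩
  choose g hg eg using hfix
  obtain ⟨p, ⟨e⟩⟩ := Finite.exists_equiv_fin (α ⊕ Fin l)
  let co : α ⊕ Fin l → ℕ → ℕ := fun a z => (Denumerable.ofNat (List ℕ) z).getD (e a) 0
  have hco : ∀ a, Computable (co a) := fun a =>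
    comp_getD (Primrec.ofNat (List ℕ)).to_comp (Computable.const _)
  let σ : ℕ × ℕ → Prop := fun z => Rz φ (fun a => co (Sum.inl a) z.2) (fun i => co (Sum.inr i) z.2) ∧
    ∀ a, InK k (u a) → co a z.2 = g a z.1
  have hσ : Dl n σ := by
    refine Dl.and (dl_cf h1 (v := fun a (z : ℕ × ℕ) => co (Sum.inl a) z.2) (c := fun i (z : ℕ × ℕ) => co (Sum.inr i) z.2)
      (fun a => (Cf.of_comp (hco _)).comp Cf.snd) (fun a => (Cf.of_comp (hco _)).comp Cf.snd)) ?_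
    refine Dl.finiteAll (p := fun a (z : ℕ × ℕ) => InK k (u a) → co a z.2 = g a z.1) fun a => ?_
    exact Dl.imp (Dl.const _) (Dl.eq ((Cf.of_comp (hco _)).comp Cf.snd) ((hg a).comp Cf.fst))
  have hcode : Cf n (fun z => Encodable.encode (List.ofFn fun i => f (e.symm i) z)) :=
    Cf.comp1 Computable.encode (Cf.list fun i => hf _)
  have hdec : ∀ a z, co a (Encodable.encode (List.ofFn fun i => f (e.symm i) z)) = f a z := by
    intro a z
    simp only [co, Denumerable.ofNat_encode]
    simp [List.getD_eq_getElem?_getD]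
  obtain ⟨s, hs, hs'⟩ := bounded_descent (C := C) hσ (k := k) (K := K) hcode (by
    have hfa : ∀ᶠ m in UU, ∀ a, InK k (u a) → rep (u a) m = g a (C.q k m) := by
      refine eventually_all.2 fun a => ?_
      by_cases ha : InK k (u a)
      · exact (eg a ha).mono fun m hm _ => hm
      · exact Eventually.of_forall fun m h => (ha h).elim
    filter_upwards [H, hfa] with m hm hm'
    refine ⟨?_, fun a ha => ?_⟩
    · dsimp only
      simp only [hdec]
      simp only [← ef]
      exact hm
    · dsimp only
      rw [hdec, ← ef]; exact hm' a ha)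
  have hcs : ∀ a, Cf n (fun z => co a (s z)) := fun a => (Cf.of_comp (hco a)).comp hs
  have hfixed : ∀ a, InK k (u a) → mkK C k _ (hcs a) = u a := by
    intro a ha
    refine mkK_eq ?_
    filter_upwards [hs', eg a ha] with m h1 h2
    rw [h2, h1.2 a ha]
  refine ⟨fun a => mkK C k _ (hcs (Sum.inl a)), fun i => mkK C k _ (hcs (Sum.inr i)),
    fun a => mkK_InK _ _ _, fun a => mkK_InK _ _ _, fun a ha => hfixed (Sum.inl a) ha,
    fun a ha => hfixed (Sum.inr a) ha, ?_⟩
  rw [h]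
  filter_upwards [hs', eventually_all.2 (fun a => rep_mkK k _ (hcs a))] with m h1 h2
  have e1 : (fun a => rep (mkK C k _ (hcs (Sum.inl a))) m) =
      fun a => co (Sum.inl a) (s (C.q k m)) := funext fun a => h2 _
  have e2 : (fun i => rep (mkK C k _ (hcs (Sum.inr i))) m) =
      fun i => co (Sum.inr i) (s (C.q k m)) := funext fun a => h2 _
  rw [e1, e2]
  exact h1.1

theorem Desc.sigma {k : ℕ} {φ : lang.BoundedFormula α l} (h : SigmaFm (n + 1) l φ) : Desc C k φ := by
  refine (sp_ind (S := fun m l φ => m = n + 1 → Desc C k φ) (P := fun _ _ _ => True)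
    ?_ ?_ ?_ ?_ ?_ ?_).1 _ _ _ h rfl
  · intro m l φ h _; exact Desc.base (Los.delta0 h) (delta0_Dl h)
  · intro m l φ hπ _ hm
    have hm' : m ≤ n := by omega
    exact Desc.base (Los.sigma_pi.2 _ _ _ hπ hm') (pi_Dl hm' hπ)
  · intro m l φ _ ih hm v xs H
    rw [BoundedFormula.realize_ex] at H
    obtain ⟨y, hy⟩ := H
    obtain ⟨v', ys, h1, h2, h3, h4, h5⟩ := ih hm v _ hy
    refine ⟨v', fun i => ys i.castSucc, h1, fun i => h2 _, h3, fun i hi => ?_, ?_⟩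
    · show ys i.castSucc = xs i
      rw [h4 i.castSucc (by simpa using hi)]; simp
    · rw [BoundedFormula.realize_ex]
      refine ⟨ys (Fin.last _), ?_⟩
      have : (Fin.snoc (fun i => ys i.castSucc) (ys (Fin.last _)) : Fin (l + 1) → MN C) = ys :=
        Fin.snoc_init_self (α := fun _ => MN C) ys
      rw [this]; exact h5
  all_goals intros; trivial

theorem card : CARD (MN C) (n + 1) := by
  intro F hF a ha
  obtain ⟨p, φ, w, hφ, hR⟩ := hF
  have hR' : ∀ x y, F x y ↔ φ.Realize (Sum.elim ![x, y] w) finZeroElim := fun x y => hR ![x, y]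
  obtain ⟨k1, h1⟩ := common w
  obtain ⟨k2, h2⟩ := exists_h a
  obtain ⟨k, hk1, hk2⟩ : ∃ k, k1 ≤ k ∧ k2 ≤ k := ⟨max k1 k2, le_max_left _ _, le_max_right _ _⟩
  obtain ⟨x, hx⟩ := exists_new (C := C) k
  obtain ⟨d, hd, hF⟩ := ha x
  have hdk : InK k d := by
    apply InK.of_le
    rw [lt_iff] at hd
    filter_upwards [hd, h2 k hk2] with m h3 h4
    omega
  obtain ⟨v', xs', e1, e2, e3, e4, e5⟩ := Desc.sigma (C := C) (k := k) hφ _ _ ((hR' x d).1 hF)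
  have hv1 : v' (Sum.inl 1) = d := e3 (Sum.inl 1) hdk
  have hvw : ∀ i, v' (Sum.inr i) = w i := fun i => e3 (Sum.inr i) (h1 k hk1 i)
  refine ⟨x, v' (Sum.inl 0), d, ?_, hd, hF, ?_⟩
  · intro h; rw [h] at hx; exact hx (e1 _)
  · rw [hR']
    have : Sum.elim ![v' (Sum.inl 0), d] w = v' := by
      funext a
      rcases a with a | a
      · fin_cases a
        · rfl
        · exact hv1.symm
      · exact (hvw a).symm
    rw [this]
    have : (finZeroElim : Fin 0 → MN C) = xs' := by funext i; exact i.elim0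
    rw [this]; exact e5

theorem up {φ : lang.BoundedFormula α l} (h : SigmaFm (n + 1) l φ) :
    ∀ (v : α → MN C) (xs : Fin l → MN C), φ.Realize v xs →
    ∀ᶠ m in UU, Rz φ (fun a => rep (v a) m) (fun i => rep (xs i) m) := by
  refine (sp_ind (S := fun m l φ => m = n + 1 → ∀ (v : α → MN C) (xs : Fin l → MN C), φ.Realize v xs →
    ∀ᶠ m in UU, Rz φ (fun a => rep (v a) m) (fun i => rep (xs i) m)) (P := fun _ _ _ => True)
    ?_ ?_ ?_ ?_ ?_ ?_).1 _ _ _ h rfl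
  · intro m l φ h _ v xs; exact (Los.delta0 h v xs).1
  · intro m l φ hπ _ hm v xs
    have hm' : m ≤ n := by omega
    exact (Los.sigma_pi.2 _ _ _ hπ hm' v xs).1
  · intro m l φ _ ih hm v xs H
    rw [BoundedFormula.realize_ex] at H
    obtain ⟨y, hy⟩ := H
    filter_upwards [ih hm _ _ hy] with m hm
    rw [Rz_ex]
    rw [snoc_rep] at hm
    exact ⟨_, hm⟩
  all_goals intros; trivial

theorem down {k : ℕ} {φ : lang.BoundedFormula α l} (h : SigmaFm (n + 1) l φ) {D : ℕ → Prop} (hD : Dl n D)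
    (hDk : ∀ᶠ m in UU, D (C.q k m)) :
    ∀ (f : α → ℕ → ℕ) (g : Fin l → ℕ → ℕ), (∀ a, Cf n (f a)) → (∀ i, Cf n (g i)) →
    (∀ x, D x → Rz φ (fun a => f a x) (fun i => g i x)) →
    ∀ (v : α → MN C) (xs : Fin l → MN C), (∀ a, ∀ᶠ m in UU, rep (v a) m = f a (C.q k m)) →
      (∀ i, ∀ᶠ m in UU, rep (xs i) m = g i (C.q k m)) → φ.Realize v xs := by
  have base : ∀ {l : ℕ} {φ : lang.BoundedFormula α l}, Los C φ → 
    ∀ (f : α → ℕ → ℕ) (g : Fin l → ℕ → ℕ), (∀ a, Cf n (f a)) → (∀ i, Cf n (g i)) →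
    (∀ x, D x → Rz φ (fun a => f a x) (fun i => g i x)) →
    ∀ (v : α → MN C) (xs : Fin l → MN C), (∀ a, ∀ᶠ m in UU, rep (v a) m = f a (C.q k m)) →
      (∀ i, ∀ᶠ m in UU, rep (xs i) m = g i (C.q k m)) → φ.Realize v xs := by
    intro l φ hl f g _ _ H v xs hv hxs
    rw [hl]
    filter_upwards [hDk, eventually_all.2 hv, eventually_all.2 hxs] with m h1 h2 h3
    simp only [h2, h3]
    exact H _ h1
  refine (sp_ind (S := fun m l φ => m = n + 1 → ∀ (f : α → ℕ → ℕ) (g : Fin l → ℕ → ℕ), (∀ a, Cf n (f a)) → (∀ i, Cf n (g i)) →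
    (∀ x, D x → Rz φ (fun a => f a x) (fun i => g i x)) →
    ∀ (v : α → MN C) (xs : Fin l → MN C), (∀ a, ∀ᶠ m in UU, rep (v a) m = f a (C.q k m)) →
      (∀ i, ∀ᶠ m in UU, rep (xs i) m = g i (C.q k m)) → φ.Realize v xs) (P := fun _ _ _ => True)
    ?_ ?_ ?_ ?_ ?_ ?_).1 _ _ _ h rfl
  · intro m l φ h _; exact base (Los.delta0 h)
  · intro m l φ hπ _ hm
    have hm' : m ≤ n := by omega
    exact base (Los.sigma_pi.2 _ _ _ hπ hm')
  · intro m l φ hφ ih hm f g hf hg H v xs hv hxs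
    have hφ' : SigmaFm (n + 1) (l + 1) φ := hm ▸ hφ
    have hR : Sg (n + 1) (ℕ × ℕ) (fun z => ¬ D z.1 ∨
        Rz φ (fun a => f a z.1) (Fin.snoc (fun i => g i z.1) z.2 : Fin (l + 1) → ℕ)) :=
      Sg.or (Sg.comp (p := fun x => ¬ D x) hD.2 Computable.fst)
        (sg_cf (sigma_pi_Sg.1 _ _ _ hφ') (v := fun a (z : ℕ × ℕ) => f a z.1)
          (c := fun i (z : ℕ × ℕ) => (Fin.snoc (fun i => g i z.1) z.2 : Fin (l + 1) → ℕ) i)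
          (fun a => (hf a).comp Cf.fst) (fun i => Cf_snoc hg i))
    obtain ⟨s, hs, hs'⟩ := Cf.uniformize hR (fun x => by
      by_cases hx : D x
      · obtain ⟨y, hy⟩ := (Rz_ex _ _ _).1 (H x hx)
        exact ⟨y, Or.inr hy⟩
      · exact ⟨0, Or.inl hx⟩)
    rw [BoundedFormula.realize_ex]
    refine ⟨mkK C k s hs, ih hm f (fun i z => (Fin.snoc (fun i => g i z) (s z) : Fin (l + 1) → ℕ) i) hf ?_ ?_ v _ hv ?_⟩
    · intro i
      refine Fin.lastCases ?_ (fun j => ?_) i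
      · simpa using hs
      · simpa using hg j
    · intro x hx
      exact (hs' x).resolve_left (fun h => h hx)
    · intro i
      refine Fin.lastCases ?_ (fun j => ?_) i
      · simpa using rep_mkK k s hs
      · simpa using hxs j
  all_goals intros; trivial

end AH


namespace AH
open FirstOrder Language ArithFC

section terms
variable {ι κ : Type}

/-- term-definable functions -/
def T (f : (ι → ℕ) → ℕ) : Prop := ∃ t : lang.Term ι, ∀ v, f v = Tv t v

theorem T.var (i : ι) : T (fun v : ι → ℕ => v i) := ⟨Term.var i, fun _ => rfl⟩
theorem T.zero : T (fun _ : ι → ℕ => 0) := ⟨Term.func (L := lang) (l := 0) Func.zero ![], fun _ => rfl⟩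
theorem T.one : T (fun _ : ι → ℕ => 1) := ⟨Term.func (L := lang) (l := 0) Func.one ![], fun _ => rfl⟩
theorem T.add {f g : (ι → ℕ) → ℕ} (hf : T f) (hg : T g) : T (fun v => f v + g v) := by
  obtain ⟨t, ht⟩ := hf
  obtain ⟨u, hu⟩ := hg
  refine ⟨Term.func (L := lang) (l := 2) Func.add ![t, u], fun v => ?_⟩
  show f v + g v = _
  rw [ht, hu]; rfl
theorem T.mul {f g : (ι → ℕ) → ℕ} (hf : T f) (hg : T g) : T (fun v => f v * g v) := by
  obtain ⟨t, ht⟩ := hf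
  obtain ⟨u, hu⟩ := hg
  refine ⟨Term.func (L := lang) (l := 2) Func.mul ![t, u], fun v => ?_⟩
  show f v * g v = _
  rw [ht, hu]; rfl

theorem Tv_subst (t : lang.Term ι) (s : ι → lang.Term κ) (v : κ → ℕ) :
    Tv (t.subst s) v = Tv t (fun i => Tv (s i) v) := Term.realize_subst (M := NN)

/-- relations definable by a bounded formula, uniformly under substitution of terms -/
def D0 (R : (ι → ℕ) → Prop) : Prop :=
  ∀ (α : Type) (l : ℕ) (t : ι → lang.Term (α ⊕ Fin l)), ∃ φ : lang.BoundedFormula α l,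
    IsDelta0 l φ ∧ ∀ v xs, Rz φ v xs ↔ R (fun i => Tv (t i) (Sum.elim v xs))

theorem D0.of_iff {R S : (ι → ℕ) → Prop} (h : D0 R) (h' : ∀ v, S v ↔ R v) : D0 S := by
  have : S = R := funext fun v => propext (h' v)
  rwa [this]

theorem D0.subst {R : (κ → ℕ) → Prop} (h : D0 R) {f : κ → (ι → ℕ) → ℕ} (hf : ∀ j, T (f j)) :
    D0 (fun v => R (fun j => f j v)) := by
  choose s hs using hf
  intro α l t
  obtain ⟨φ, h1, h2⟩ := h α l (fun j => (s j).subst t)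
  refine ⟨φ, h1, fun v xs => (h2 v xs).trans ?_⟩
  simp only [Tv_subst, hs]

theorem D0.eq {f g : (ι → ℕ) → ℕ} (hf : T f) (hg : T g) : D0 (fun v => f v = g v) := by
  obtain ⟨t, ht⟩ := hf
  obtain ⟨u, hu⟩ := hg
  intro α l s
  refine ⟨_, IsDelta0.equal l (t.subst s) (u.subst s), fun v xs => ?_⟩
  beta_reduce
  rw [Rz_equal, Tv_subst, Tv_subst, ht, hu]

theorem D0.lt {f g : (ι → ℕ) → ℕ} (hf : T f) (hg : T g) : D0 (fun v => f v < g v) := by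
  obtain ⟨t, ht⟩ := hf
  obtain ⟨u, hu⟩ := hg
  intro α l s
  refine ⟨_, IsDelta0.rel l 2 (Rel.lt : lang.Relations 2) ![t.subst s, u.subst s], fun v xs => ?_⟩
  refine (Rz_rel v xs _ _).trans ?_
  show Tv (t.subst s) _ < Tv (u.subst s) _ ↔ f _ < g _
  rw [ht, hu, Tv_subst, Tv_subst]

theorem D0.imp {R S : (ι → ℕ) → Prop} (hR : D0 R) (hS : D0 S) : D0 (fun v => R v → S v) := by
  intro α l t
  obtain ⟨φ, h1, h2⟩ := hR α l t
  obtain ⟨ψ, h3, h4⟩ := hS α l t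
  refine ⟨_, IsDelta0.imp l h1 h3, fun v xs => ?_⟩
  rw [Rz_imp, h2, h4]

theorem D0.not {R : (ι → ℕ) → Prop} (hR : D0 R) : D0 (fun v => ¬ R v) := by
  refine (hR.imp (D0.lt T.zero T.zero)).of_iff fun v => ?_
  simp

theorem D0.and {R S : (ι → ℕ) → Prop} (hR : D0 R) (hS : D0 S) : D0 (fun v => R v ∧ S v) :=
  (hR.imp hS.not).not.of_iff fun v => by tauto

theorem D0.or {R S : (ι → ℕ) → Prop} (hR : D0 R) (hS : D0 S) : D0 (fun v => R v ∨ S v) :=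
  (hR.not.imp hS).of_iff fun v => by tauto

theorem Tv_lift {α : Type} {l : ℕ} (t : lang.Term (α ⊕ Fin l)) (v : α → ℕ) (xs : Fin l → ℕ) (y : ℕ) :
    Tv (t.liftAt 1 l) (Sum.elim v (Fin.snoc xs y : Fin (l + 1) → ℕ)) = Tv t (Sum.elim v xs) :=
  realize_lift (M := NN) t v xs y

/-- extend a term tuple by the last bound variable -/
def extT {α : Type} {l : ℕ} (t : ι → lang.Term (α ⊕ Fin l)) : Option ι → lang.Term (α ⊕ Fin (l + 1))
  | none => Term.var (Sum.inr (Fin.last l))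
  | some i => (t i).liftAt 1 l

theorem Tv_last {α : Type} {l : ℕ} (v : α → ℕ) (xs : Fin l → ℕ) (y : ℕ) :
    Tv (Term.var (Sum.inr (Fin.last l)) : lang.Term (α ⊕ Fin (l + 1)))
      (Sum.elim v (Fin.snoc xs y : Fin (l + 1) → ℕ)) = y := by
  show (Fin.snoc xs y : Fin (l + 1) → ℕ) (Fin.last l) = y
  simp

theorem D0.ball {R : ℕ → (ι → ℕ) → Prop} {f : (ι → ℕ) → ℕ} (hf : T f)
    (hR : D0 (fun w : Option ι → ℕ => R (w none) (fun i => w (some i)))) :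
    D0 (fun v => ∀ y < f v, R y v) := by
  obtain ⟨s, hs⟩ := hf
  intro α l t
  obtain ⟨φ, h1, h2⟩ := hR α (l + 1) (extT t)
  refine ⟨_, IsDelta0.bdAll l (s.subst t) h1, fun v xs => ?_⟩
  beta_reduce
  rw [Rz_bdAll, Tv_subst, hs]
  refine forall_congr' fun y => imp_congr Iff.rfl ?_
  rw [h2]
  simp only [extT, Tv_lift, Tv_last]

theorem D0.bex {R : ℕ → (ι → ℕ) → Prop} {f : (ι → ℕ) → ℕ} (hf : T f)
    (hR : D0 (fun w : Option ι → ℕ => R (w none) (fun i => w (some i)))) :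
    D0 (fun v => ∃ y < f v, R y v) :=
  (D0.ball (R := fun y v => ¬ R y v) hf hR.not).not.of_iff fun v => by push Not; rfl

theorem T.suc {f : (ι → ℕ) → ℕ} (hf : T f) : T (fun v => f v + 1) := hf.add T.one
theorem T.up {f : (ι → ℕ) → ℕ} (hf : T f) : T (fun w : Option ι → ℕ => f (fun i => w (some i))) := by
  obtain ⟨t, ht⟩ := hf
  refine ⟨t.subst (fun i => Term.var (some i)), fun v => ?_⟩
  beta_reduce
  rw [ht, Tv_subst]; rfl

theorem D0.npair {a b c : (ι → ℕ) → ℕ} (ha : T a) (hb : T b) (hc : T c) :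
    D0 (fun v => c v = Nat.pair (a v) (b v)) := by
  refine (((D0.lt ha hb).and (D0.eq hc ((hb.mul hb).add ha))).or
    ((D0.lt ha hb).not.and (D0.eq hc (((ha.mul ha).add ha).add hb)))).of_iff fun v => ?_
  unfold Nat.pair
  split_ifs with h <;> simp [h]

theorem D0.left {a c : (ι → ℕ) → ℕ} (ha : T a) (hc : T c) :
    D0 (fun v => c v = (a v).unpair.1) := by
  refine (D0.bex (f := fun v => a v + 1) (R := fun y v => a v = Nat.pair (c v) y) ha.suc
    (D0.npair hc.up (T.var none) ha.up)).of_iff fun v => ?_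
  constructor
  · intro h
    exact ⟨(a v).unpair.2, Nat.lt_succ_of_le (Nat.unpair_right_le _), by rw [h, Nat.pair_unpair]⟩
  · rintro ⟨y, _, h⟩
    rw [h]; simp

theorem D0.right {a c : (ι → ℕ) → ℕ} (ha : T a) (hc : T c) :
    D0 (fun v => c v = (a v).unpair.2) := by
  refine (D0.bex (f := fun v => a v + 1) (R := fun y v => a v = Nat.pair y (c v)) ha.suc
    (D0.npair (T.var none) hc.up ha.up)).of_iff fun v => ?_
  constructor
  · intro h
    exact ⟨(a v).unpair.1, Nat.lt_succ_of_le (Nat.unpair_left_le _), by rw [h, Nat.pair_unpair]⟩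
  · rintro ⟨y, _, h⟩
    rw [h]; simp

theorem D0.mod {a b c : (ι → ℕ) → ℕ} (ha : T a) (hb : T b) (hc : T c) :
    D0 (fun v => c v = a v % (b v + 1)) := by
  refine ((D0.lt hc hb.suc).and (D0.bex (f := fun v => a v + 1)
    (R := fun y v => a v = y * (b v + 1) + c v) ha.suc
    (D0.eq ha.up (((T.var none).mul hb.up.suc).add hc.up)))).of_iff fun v => ?_
  constructor
  · intro h
    refine ⟨h ▸ Nat.mod_lt _ (Nat.succ_pos _), a v / (b v + 1), Nat.lt_succ_of_le (Nat.div_le_self _ _), ?_⟩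
    rw [h, mul_comm]; exact (Nat.div_add_mod _ _).symm
  · rintro ⟨h1, y, _, h⟩
    rw [h, mul_comm, Nat.mul_add_mod, Nat.mod_eq_of_lt h1]

theorem D0.beta {a b c : (ι → ℕ) → ℕ} (ha : T a) (hb : T b) (hc : T c) :
    D0 (fun v => c v = Nat.beta (a v) (b v)) := by
  refine (D0.bex (f := fun v => a v + 1) (R := fun y v => ∃ z < a v + 1, a v = Nat.pair y z ∧
    c v = y % ((b v + 1) * z + 1)) ha.suc ?_).of_iff fun v => ?_
  · refine D0.bex (f := fun w => a (fun i => w (some i)) + 1) (R := fun z w =>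
      a (fun i => w (some i)) = Nat.pair (w none) z ∧
      c (fun i => w (some i)) = w none % ((b (fun i => w (some i)) + 1) * z + 1)) ha.up.suc ?_
    exact (D0.npair (T.var _) (T.var none) ha.up.up).and
      (D0.mod (T.var (some none)) (hb.up.up.suc.mul (T.var none)) hc.up.up)
  · unfold Nat.beta
    constructor
    · intro h
      exact ⟨_, Nat.lt_succ_of_le (Nat.unpair_left_le (a v)), _, Nat.lt_succ_of_le (Nat.unpair_right_le (a v)),
        (Nat.pair_unpair _).symm, h⟩
    · rintro ⟨y, _, z, _, h1, h2⟩
      rw [h1]; simpa using h2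

/-- existential closures of bounded relations -/
def S1 (R : (ι → ℕ) → Prop) : Prop :=
  ∃ A : ℕ → (ι → ℕ) → Prop, D0 (fun w : Option ι → ℕ => A (w none) (fun i => w (some i))) ∧
    ∀ v, R v ↔ ∃ y, A y v

theorem S1.of_iff {R S : (ι → ℕ) → Prop} (h : S1 R) (h' : ∀ v, S v ↔ R v) : S1 S := by
  have : S = R := funext fun v => propext (h' v)
  rwa [this]

theorem D0.up {R : (ι → ℕ) → Prop} (h : D0 R) : D0 (fun w : Option ι → ℕ => R (fun i => w (some i))) :=
  D0.subst h (f := fun i w => w (some i)) fun i => T.var (some i)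

theorem S1.of {R : (ι → ℕ) → Prop} (h : D0 R) : S1 R := ⟨fun _ v => R v, h.up, fun v => by simp⟩

theorem S1.subst {R : (κ → ℕ) → Prop} (h : S1 R) {f : κ → (ι → ℕ) → ℕ} (hf : ∀ j, T (f j)) :
    S1 (fun v => R (fun j => f j v)) := by
  obtain ⟨A, hA, h⟩ := h
  refine ⟨fun y v => A y (fun j => f j v), ?_, fun v => h _⟩
  have := D0.subst hA (f := fun (j : Option κ) (w : Option ι → ℕ) => Option.elim j (w none) (fun j => f j (fun i => w (some i))))
    (fun j => by
      cases j with
      | none => exact T.var none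
      | some j => exact (hf j).up)
  exact this

/-- bounded search form of an element of `S1`, one extra variable in front -/
theorem D0.bd {A : ℕ → (ι → ℕ) → Prop} (hA : D0 (fun w : Option ι → ℕ => A (w none) (fun i => w (some i)))) :
    D0 (fun w : Option ι → ℕ => ∃ y < w none + 1, A y (fun i => w (some i))) := by
  refine D0.bex (f := fun w : Option ι → ℕ => w none + 1) (R := fun y w => A y (fun i => w (some i))) (T.var none).suc ?_
  exact D0.subst hA (f := fun (j : Option ι) (w : Option (Option ι) → ℕ) => Option.elim j (w none) (fun j => w (some (some j))))
    (fun j => by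
      cases j with
      | none => exact T.var none
      | some j => exact T.var _)

theorem S1.and {R S : (ι → ℕ) → Prop} (hR : S1 R) (hS : S1 S) : S1 (fun v => R v ∧ S v) := by
  obtain ⟨A, hA, h⟩ := hR
  obtain ⟨B, hB, h'⟩ := hS
  refine ⟨fun z v => (∃ y < z + 1, A y v) ∧ (∃ y < z + 1, B y v), hA.bd.and hB.bd, fun v => ?_⟩
  beta_reduce
  rw [h, h']
  constructor
  · rintro ⟨⟨x, hx⟩, y, hy⟩
    exact ⟨x + y, ⟨x, by omega, hx⟩, y, by omega, hy⟩
  · rintro ⟨z, ⟨x, _, hx⟩, y, _, hy⟩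
    exact ⟨⟨x, hx⟩, y, hy⟩

theorem S1.ex {R : ℕ → (ι → ℕ) → Prop}
    (hR : S1 (fun w : Option ι → ℕ => R (w none) (fun i => w (some i)))) :
    S1 (fun v => ∃ y, R y v) := by
  obtain ⟨A, hA, h⟩ := hR
  have h' : ∀ z v, R z v ↔ ∃ y, A y (fun o : Option ι => o.elim z v) := fun z v => h (fun o : Option ι => o.elim z v)
  refine ⟨fun u v => ∃ z < u + 1, ∃ y < u + 1, A y (fun o : Option ι => o.elim z v), ?_, fun v => ?_⟩
  · refine D0.bex (f := fun w : Option ι → ℕ => w none + 1) (R := fun z w => ∃ y < w none + 1,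
      A y (fun o : Option ι => o.elim z (fun i => w (some i)))) (T.var none).suc ?_
    refine D0.subst hA.bd (f := fun (j : Option (Option ι)) (w : Option (Option ι) → ℕ) =>
      match j with
      | none => w (some none)
      | some o => o.elim (w none) (fun i => w (some (some i)))) ?_
    rintro (_ | _ | i)
    · exact T.var _
    · exact T.var _
    · exact T.var _
  · simp only [h']
    constructor
    · rintro ⟨z, y, hy⟩
      exact ⟨z + y, z, by omega, y, by omega, hy⟩
    · rintro ⟨u, z, _, y, _, hy⟩
      exact ⟨z, y, hy⟩

theorem S1.ball {R : ℕ → (ι → ℕ) → Prop} {f : (ι → ℕ) → ℕ} (hf : T f)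
    (hR : S1 (fun w : Option ι → ℕ => R (w none) (fun i => w (some i)))) :
    S1 (fun v => ∀ y < f v, R y v) := by
  obtain ⟨A, hA, h⟩ := hR
  have h' : ∀ z v, R z v ↔ ∃ y, A y (fun o : Option ι => o.elim z v) := fun z v => h (fun o : Option ι => o.elim z v)
  refine ⟨fun u v => ∀ z < f v, ∃ y < u + 1, A y (fun o : Option ι => o.elim z v), ?_, fun v => ?_⟩
  · refine D0.ball (f := fun w : Option ι → ℕ => f (fun i => w (some i))) (R := fun z w => ∃ y < w none + 1,
      A y (fun o : Option ι => o.elim z (fun i => w (some i)))) hf.up ?_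
    refine D0.subst hA.bd (f := fun (j : Option (Option ι)) (w : Option (Option ι) → ℕ) =>
      match j with
      | none => w (some none)
      | some o => o.elim (w none) (fun i => w (some (some i)))) ?_
    rintro (_ | _ | i)
    · exact T.var _
    · exact T.var _
    · exact T.var _
  · simp only [h']
    constructor
    · intro H
      choose! g hg using H
      refine ⟨∑ i ∈ Finset.range (f v), g i, fun z hz => ⟨g z, Nat.lt_succ_of_le ?_, hg z hz⟩⟩
      exact Finset.single_le_sum (f := g) (fun _ _ => Nat.zero_le _) (Finset.mem_range.2 hz)
    · rintro ⟨u, hu⟩ z hz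
      obtain ⟨y, _, hy⟩ := hu z hz
      exact ⟨y, hy⟩

end terms

/-- partial functions with `S1` graph -/
def Gr (f : ℕ →. ℕ) : Prop := ∀ {ι : Type} {a b : (ι → ℕ) → ℕ}, T a → T b → S1 (fun v => b v ∈ f (a v))

theorem prec_graph {f g : ℕ →. ℕ} (a n b : ℕ) :
    b ∈ (n.rec (f a) fun y IH => IH.bind fun i => g (Nat.pair a (Nat.pair y i)) : Part ℕ) ↔
    ∃ s, (∃ z, z = Nat.beta s 0 ∧ z ∈ f a) ∧ (∀ y < n, ∃ i j, i = Nat.beta s y ∧ j = Nat.beta s (y + 1) ∧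
      j ∈ g (Nat.pair a (Nat.pair y i))) ∧ b = Nat.beta s n := by
  constructor
  · intro h
    have : ∃ L : ℕ → ℕ, L 0 ∈ f a ∧ (∀ y < n, L (y + 1) ∈ g (Nat.pair a (Nat.pair y (L y)))) ∧ b = L n := by
      induction n generalizing b with
      | zero => exact ⟨fun _ => b, h, fun y hy => absurd hy (Nat.not_lt_zero _), rfl⟩
      | succ n ih =>
        obtain ⟨i, hi, hb⟩ := Part.mem_bind_iff.1 h
        obtain ⟨L, h1, h2, h3⟩ := ih i hi
        refine ⟨fun k => if k ≤ n then L k else b, by simpa using h1, fun y hy => ?_, by simp⟩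
        rcases Nat.lt_succ_iff_lt_or_eq.1 hy with h | rfl
        · have := h2 y h
          simpa [h.le, Nat.succ_le_of_lt h] using this
        · simpa [h3] using h3 ▸ hb
    obtain ⟨L, h1, h2, h3⟩ := this
    let l := List.ofFn (fun i : Fin (n + 1) => L i)
    have hl : ∀ i ≤ n, Nat.beta (Nat.unbeta l) i = L i := by
      intro i hi
      have := Nat.beta_unbeta_coe l ⟨i, by simp [l]; omega⟩
      refine this.trans ?_
      exact List.getElem_ofFn _
    refine ⟨Nat.unbeta l, ⟨_, rfl, ?_⟩, fun y hy => ⟨_, _, rfl, rfl, ?_⟩, ?_⟩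
    · rw [hl 0 (Nat.zero_le _)]; exact h1
    · rw [hl y hy.le, hl (y + 1) hy]; exact h2 y hy
    · rw [hl n le_rfl]; exact h3
  · rintro ⟨s, ⟨z, hz, h1⟩, h2, h3⟩
    have : ∀ m ≤ n, Nat.beta s m ∈ (m.rec (f a) fun y IH => IH.bind fun i => g (Nat.pair a (Nat.pair y i)) : Part ℕ) := by
      intro m
      induction m with
      | zero => intro _; exact hz ▸ h1
      | succ m ih =>
        intro hm
        obtain ⟨i, j, hi, hj, h⟩ := h2 m hm
        exact Part.mem_bind_iff.2 ⟨_, ih (by omega), hi ▸ hj ▸ h⟩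
    rw [h3]; exact this n le_rfl

theorem Gr.of_partrec {f : ℕ →. ℕ} (hf : Nat.Partrec f) : Gr f := by
  induction hf with
  | zero =>
    intro ι a b ha hb
    exact (S1.of (D0.eq hb T.zero)).of_iff fun v => Part.mem_some_iff
  | succ =>
    intro ι a b ha hb
    exact (S1.of (D0.eq hb ha.suc)).of_iff fun v => Part.mem_some_iff
  | left =>
    intro ι a b ha hb
    exact (S1.of (D0.left ha hb)).of_iff fun v => Part.mem_some_iff
  | right =>
    intro ι a b ha hb
    exact (S1.of (D0.right ha hb)).of_iff fun v => Part.mem_some_iff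
  | @pair f g _ _ ihf ihg =>
    intro ι a b ha hb
    refine (S1.ex (R := fun x v => ∃ y, x ∈ f (a v) ∧ y ∈ g (a v) ∧ b v = Nat.pair x y) (S1.ex
      (R := fun y w => w none ∈ f (a fun i => w (some i)) ∧ y ∈ g (a fun i => w (some i)) ∧
        b (fun i => w (some i)) = Nat.pair (w none) y)
      ((ihf ha.up.up (T.var (some none))).and ((ihg ha.up.up (T.var none)).and
        (S1.of (D0.npair (T.var (some none)) (T.var none) hb.up.up)))))).of_iff fun v => ?_
    simp [Seq.seq, eq_comm]
  | @comp f g _ _ ihf ihg =>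
    intro ι a b ha hb
    refine (S1.ex (R := fun x v => x ∈ g (a v) ∧ b v ∈ f x)
      ((ihg ha.up (T.var none)).and (ihf (T.var none) hb.up))).of_iff fun v => ?_
    exact Part.mem_bind_iff
  | @prec f g _ _ ihf ihg =>
    have key : S1 (fun v : Fin 3 → ℕ => ∃ s, (∃ z, z = Nat.beta s 0 ∧ z ∈ f (v 0)) ∧
      (∀ y < v 1, ∃ i j, i = Nat.beta s y ∧ j = Nat.beta s (y + 1) ∧
      j ∈ g (Nat.pair (v 0) (Nat.pair y i))) ∧ v 2 = Nat.beta s (v 1)) := by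
      refine S1.ex ?_
      refine S1.and ?_ (S1.and ?_ ?_)
      · refine S1.ex ?_
        exact (S1.of (D0.beta (T.var (some none)) T.zero (T.var none))).and (ihf (T.var (some (some 0))) (T.var none))
      · refine S1.ball (T.var (some 1)) ?_
        refine S1.ex (S1.ex ?_)
        refine (S1.of (D0.beta (T.var (some (some (some none)))) (T.var (some (some none))) (T.var (some none)))).and
          ((S1.of (D0.beta (T.var (some (some (some none)))) (T.var (some (some none))).suc (T.var none))).and ?_)
        refine (S1.ex (R := fun p w => ∃ q, p = Nat.pair (w (some (some none))) (w (some none)) ∧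
          q = Nat.pair (w (some (some (some (some 0))))) p ∧ w none ∈ g q) (S1.ex ?_)).of_iff fun v => by simp
        exact (S1.of (D0.npair (T.var (some (some (some (some none))))) (T.var (some (some (some none)))) (T.var (some none)))).and
          ((S1.of (D0.npair (T.var (some (some (some (some (some (some 0))))))) (T.var (some none)) (T.var none))).and
            (ihg (T.var none) (T.var (some (some none)))))
      · exact S1.of (D0.beta (T.var none) (T.var (some 1)) (T.var (some 2)))
    intro ι a b ha hb
    refine (S1.ex (R := fun x v => ∃ n, a v = Nat.pair x n ∧
      b v ∈ (n.rec (f x) fun y IH => IH.bind fun i => g (Nat.pair x (Nat.pair y i)) : Part ℕ)) (S1.ex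
      (R := fun n w => a (fun i => w (some i)) = Nat.pair (w none) n ∧
       b (fun i => w (some i)) ∈ (n.rec (f (w none)) fun y IH => IH.bind fun i => g (Nat.pair (w none) (Nat.pair y i)) : Part ℕ))
       ?_)).of_iff fun v => ?_
    · refine (S1.of (D0.npair (T.var (some none)) (T.var none) ha.up.up)).and ?_
      refine (S1.subst key (f := ![fun w => w (some none), fun w => w none, fun w => b fun i => w (some (some i))]) ?_).of_iff
        fun v => prec_graph _ _ _
      intro j
      fin_cases j
      · exact T.var _
      · exact T.var _
      · exact hb.up.up
    · constructor
      · intro h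
        exact ⟨_, _, (Nat.pair_unpair _).symm, h⟩
      · rintro ⟨x, n, h, h'⟩
        rw [h]; simpa [Nat.unpaired] using h'
  | @rfind f _ ih =>
    intro ι a b ha hb
    refine (S1.and (S1.ex (R := fun w v => w = Nat.pair (a v) (b v) ∧ 0 ∈ f w)
      ((S1.of (D0.npair ha.up hb.up (T.var none))).and (ih (T.var none) T.zero)))
      (S1.ball (R := fun m v => ∃ w z, w = Nat.pair (a v) m ∧ z + 1 ∈ f w) hb (S1.ex (S1.ex
        ((S1.of (D0.npair ha.up.up.up (T.var (some (some none))) (T.var (some none)))).and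
          (ih (T.var (some none)) (T.var none).suc)))))).of_iff fun v => ?_
    refine Nat.mem_rfind.trans ?_
    simp only [Part.mem_map_iff, Part.map_eq_map, exists_eq_left]
    constructor
    · rintro ⟨⟨z, hz, h⟩, h2⟩
      obtain rfl : z = 0 := by simpa using h
      refine ⟨hz, fun m hm => ?_⟩
      obtain ⟨z, hz, h⟩ := h2 hm
      obtain ⟨k, rfl⟩ : ∃ k, z = k + 1 := Nat.exists_eq_succ_of_ne_zero (by simpa using h)
      exact ⟨_, k, rfl, hz⟩
    · rintro ⟨h1, h2⟩
      refine ⟨⟨0, h1, by simp⟩, fun {m} hm => ?_⟩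
      obtain ⟨w, z, rfl, h⟩ := h2 m hm
      exact ⟨_, h, by simp⟩

theorem dual {α : Type} :
    (∀ m n (φ : lang.BoundedFormula α n), SigmaFm m n φ → ∃ ψ, PiFm m n ψ ∧ ∀ v xs, Rz ψ v xs ↔ ¬ Rz φ v xs) ∧
    (∀ m n (φ : lang.BoundedFormula α n), PiFm m n φ → ∃ ψ, SigmaFm m n ψ ∧ ∀ v xs, Rz ψ v xs ↔ ¬ Rz φ v xs) := by
  refine sp_ind (S := fun m n φ => ∃ ψ, PiFm m n ψ ∧ ∀ v xs, Rz ψ v xs ↔ ¬ Rz φ v xs)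
    (P := fun m n φ => ∃ ψ, SigmaFm m n ψ ∧ ∀ v xs, Rz ψ v xs ↔ ¬ Rz φ v xs) ?_ ?_ ?_ ?_ ?_ ?_
  · intro m n φ h
    exact ⟨_, PiFm.delta0 m n (IsDelta0.imp n h (IsDelta0.falsum n)), fun v xs => Iff.rfl⟩
  · rintro m n φ _ ⟨ψ, h1, h2⟩
    exact ⟨ψ, PiFm.ofSigma m n h1, h2⟩
  · rintro m n φ _ ⟨ψ, h1, h2⟩
    refine ⟨_, PiFm.all m n h1, fun v xs => ?_⟩
    rw [Rz_all, Rz_ex, not_exists]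
    exact forall_congr' fun y => h2 _ _
  · intro m n φ h
    exact ⟨_, SigmaFm.delta0 m n (IsDelta0.imp n h (IsDelta0.falsum n)), fun v xs => Iff.rfl⟩
  · rintro m n φ _ ⟨ψ, h1, h2⟩
    exact ⟨ψ, SigmaFm.ofPi m n h1, h2⟩
  · rintro m n φ _ ⟨ψ, h1, h2⟩
    refine ⟨_, SigmaFm.ex m n h1, fun v xs => ?_⟩
    rw [Rz_all, Rz_ex, not_forall]
    exact exists_congr fun y => h2 _ _

/-- relations on ℕ definable by a Σ_m formula, uniformly -/
def SF {ι : Type} (m : ℕ) (R : (ι → ℕ) → Prop) : Prop :=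
  ∀ (α : Type) (l : ℕ) (t : ι → lang.Term (α ⊕ Fin l)), ∃ φ : lang.BoundedFormula α l,
    SigmaFm m l φ ∧ ∀ v xs, Rz φ v xs ↔ R (fun i => Tv (t i) (Sum.elim v xs))

theorem SF.of_S1 {ι : Type} {R : (ι → ℕ) → Prop} (h : S1 R) : SF 1 R := by
  obtain ⟨A, hA, h⟩ := h
  intro α l t
  obtain ⟨φ, h1, h2⟩ := hA α (l + 1) (extT t)
  refine ⟨_, SigmaFm.ex 0 l (SigmaFm.delta0 _ _ h1), fun v xs => ?_⟩
  rw [Rz_ex, h]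
  refine exists_congr fun y => ?_
  rw [h2]
  simp only [extT, Tv_lift, Tv_last]

theorem SF.ex_not {ι : Type} {m : ℕ} {R : ℕ → (ι → ℕ) → Prop}
    (h : SF m (fun w : Option ι → ℕ => R (w none) (fun i => w (some i)))) :
    SF (m + 1) (fun v => ∃ y, ¬ R y v) := by
  intro α l t
  obtain ⟨φ, h1, h2⟩ := h α (l + 1) (extT t)
  obtain ⟨ψ, h3, h4⟩ := dual.1 _ _ _ h1
  refine ⟨_, SigmaFm.ex m l (SigmaFm.ofPi _ _ h3), fun v xs => ?_⟩
  rw [Rz_ex]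
  refine exists_congr fun y => ?_
  rw [h4, h2]
  simp only [extT, Tv_lift, Tv_last]

theorem SF.of_Sg {m : ℕ} : ∀ {P : ℕ → Prop}, Sg (m + 1) ℕ P → ∀ {ι : Type} {k : (ι → ℕ) → ℕ},
    S1 (fun w : Option ι → ℕ => w none = k (fun i => w (some i))) → SF (m + 1) (fun v => P (k v)) := by
  induction m with
  | zero =>
    intro P hP ι k hk
    obtain ⟨f, hf, h⟩ := hP.partrec
    refine SF.of_S1 ?_
    refine (S1.ex (R := fun z v => z = k v ∧ ∃ y, y ∈ f z) (hk.and (S1.ex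
      ((Gr.of_partrec hf) (T.var (some none)) (T.var none))))).of_iff fun v => ?_
    simp [h]
  | succ m ih =>
    intro P hP ι k hk
    obtain ⟨r, hr, h⟩ := hP
    have h' : (fun v : ι → ℕ => P (k v)) = fun v => ∃ y, ¬ r (k v, y) := funext fun v => propext (h _)
    rw [h']
    refine SF.ex_not (R := fun y v => r (k v, y)) ?_
    have hr' : Sg (m + 1) ℕ (fun z => r z.unpair) := hr.comp Computable.unpair
    have := ih hr' (ι := Option ι) (k := fun w => Nat.pair (k fun i => w (some i)) (w none)) ?_
    · simpa using this
    · refine (S1.ex (R := fun z w => z = k (fun i => w (some (some i))) ∧ w none = Nat.pair z (w (some none)))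
        (S1.and ?_ (S1.of (D0.npair (T.var none) (T.var (some (some none))) (T.var (some none)))))).of_iff fun v => by simp
      exact S1.subst hk (f := fun (j : Option ι) (w : Option (Option (Option ι)) → ℕ) =>
        Option.elim j (w none) (fun i => w (some (some (some i)))))
        (fun j => by
          cases j with
          | none => exact T.var none
          | some j => exact T.var _)

/-- the definability statement used for the injection -/
theorem exists_fm {m : ℕ} {P : ℕ → Prop} (hP : Sg (m + 1) ℕ P) :
    ∃ ψ : lang.BoundedFormula (Fin 2 ⊕ Fin 2) 0, SigmaFm (m + 1) 0 ψ ∧ ∀ v,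
      Rz ψ v finZeroElim ↔ P (Nat.pair (Nat.pair (v (Sum.inl 0)) (v (Sum.inl 1)))
        (Nat.pair (v (Sum.inr 0)) (v (Sum.inr 1)))) := by
  obtain ⟨ψ, h1, h2⟩ := SF.of_Sg hP (ι := Fin 2 ⊕ Fin 2)
    (k := fun v => Nat.pair (Nat.pair (v (Sum.inl 0)) (v (Sum.inl 1)))
        (Nat.pair (v (Sum.inr 0)) (v (Sum.inr 1)))) (by
      refine (S1.ex (R := fun x w => ∃ y, x = Nat.pair (w (some (Sum.inl 0))) (w (some (Sum.inl 1))) ∧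
        y = Nat.pair (w (some (Sum.inr 0))) (w (some (Sum.inr 1))) ∧ w none = Nat.pair x y) (S1.ex
        (S1.of ((D0.npair (T.var _) (T.var _) (T.var (some none))).and
          ((D0.npair (T.var _) (T.var _) (T.var none)).and
          (D0.npair (T.var (some none)) (T.var none) (T.var _))))))).of_iff fun v => by simp)
    (Fin 2 ⊕ Fin 2) 0 (fun i => Term.var (Sum.inl i))
  exact ⟨ψ, h1, fun v => h2 v finZeroElim⟩

end AH


namespace AH
open FirstOrder Language ArithFC Filter

def PP (n i q t : ℕ) : Prop := ¬ U n i (Nat.pair (Nat.pair q t.unpair.1) t.unpair.2)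

def EE (n q a u j : ℕ) : Prop :=
  j.unpair.2 < a ∧ j.unpair.1.unpair.1 = u ∧ PP n j.unpair.2 q j.unpair.1 ∧
    ∀ t < j.unpair.1, ¬ PP n j.unpair.2 q t

def FF (n u i q a : ℕ) : Prop := ∃ j, (EE n q a u j ∧ ∀ j' < j, ¬ EE n q a u j') ∧ j.unpair.2 = i

theorem FF.fun {n u i i' q a : ℕ} (h : FF n u i q a) (h' : FF n u i' q a) : i = i' := by
  obtain ⟨j, ⟨h1, h2⟩, rfl⟩ := h
  obtain ⟨j', ⟨h1', h2'⟩, rfl⟩ := h'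
  rcases lt_trichotomy j j' with h | h | h
  · exact absurd h1 (h2' _ h)
  · rw [h]
  · exact absurd h1' (h2 _ h)

theorem FF.inj {n u u' i q a : ℕ} (h : FF n u i q a) (h' : FF n u' i q a) : u = u' := by
  obtain ⟨j, ⟨⟨_, h1, h2, h3⟩, _⟩, hj⟩ := h
  obtain ⟨j', ⟨⟨_, h1', h2', h3'⟩, _⟩, hj'⟩ := h'
  rw [hj] at h2 h3
  rw [hj'] at h2' h3'
  rw [← h1, ← h1']
  rcases lt_trichotomy j.unpair.1 j'.unpair.1 with h | h | h
  · exact absurd h2 (h3' _ h)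
  · rw [h]
  · exact absurd h2' (h3 _ h)

variable {n : ℕ}

theorem PP_Dl {X : Type} [Primcodable X] {i q t : X → ℕ} (hi : Cf n i) (hq : Cf n q) (ht : Cf n t) :
    Dl n (fun x => PP n (i x) (q x) (t x)) :=
  (Dl.comp (Dl.of_Sg (U_Sg n)) (hi.pair ((hq.npair ht.left).npair ht.right))).not

theorem EE_Dl {X : Type} [Primcodable X] [Inhabited X] {q a u j : X → ℕ} (hq : Cf n q) (ha : Cf n a)
    (hu : Cf n u) (hj : Cf n j) : Dl n (fun x => EE n (q x) (a x) (u x) (j x)) :=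
  (Dl.lt hj.right ha).and ((Dl.eq hj.left.left hu).and ((PP_Dl hj.right hq hj.left).and
    (Dl.ball (p := fun z : X × ℕ => ¬ PP n (j z.1).unpair.2 (q z.1) z.2)
      (PP_Dl (hj.comp Cf.fst).right (hq.comp Cf.fst) Cf.snd).not hj.left)))

theorem FF_Sg : Sg (n + 1) ℕ (fun z => FF n z.unpair.1.unpair.1 z.unpair.1.unpair.2
    z.unpair.2.unpair.1 z.unpair.2.unpair.2) := by
  have hz : Cf n (fun z : ℕ => z) := Cf.id
  have h1 : Cf n (fun z : ℕ × ℕ => z.1.unpair.1.unpair.1) := hz.left.left.comp Cf.fst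
  have h2 : Cf n (fun z : ℕ × ℕ => z.1.unpair.1.unpair.2) := hz.left.right.comp Cf.fst
  have h3 : Cf n (fun z : ℕ × ℕ => z.1.unpair.2.unpair.1) := hz.right.left.comp Cf.fst
  have h4 : Cf n (fun z : ℕ × ℕ => z.1.unpair.2.unpair.2) := hz.right.right.comp Cf.fst
  have h5 : Cf n (fun z : ℕ × ℕ => z.2) := Cf.snd
  have key := ((EE_Dl h3 h4 h1 h5).and (Dl.ball (EE_Dl (h3.comp Cf.fst) (h4.comp Cf.fst)
    (h1.comp Cf.fst) (Cf.snd (α := ℕ × ℕ) (β := ℕ))).not h5)).and (Dl.eq h5.right h2)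
  exact Sg.ex key.1

theorem EE_total {f : ℕ → ℕ} {e : ℕ} (he : ∀ x y, f x = y ↔ ∃ s, ¬ U n e (Nat.pair (Nat.pair x y) s))
    {x a : ℕ} (hx : e < a) : ∃ j, EE n x a (f x) j := by
  classical
  have hex : ∃ t, PP n e x t := by
    obtain ⟨s, hs⟩ := (he x (f x)).1 rfl
    exact ⟨Nat.pair (f x) s, by simpa [PP] using hs⟩
  refine ⟨Nat.pair (Nat.find hex) e, ?_⟩
  simp only [EE, Nat.unpair_pair]
  refine ⟨hx, ?_, Nat.find_spec hex, fun t ht => Nat.find_min hex ht⟩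
  exact ((he _ _).2 ⟨_, Nat.find_spec hex⟩).symm

theorem q_iter (C : Chain n) (k m : ℕ) : (fun x : ℕ => x.unpair.1)^[k] (C.q k m) = m := by
  induction k with
  | zero => exact C.q_zero m
  | succ k ih => rw [Function.iterate_succ_apply, C.q_left]; exact ih

theorem injections (C : Chain n) (b : MN C) : ExSigmaInj (MN C) (n + 1) b (mkK C 0 _ Cf.id) := by
  set a : MN C := mkK C 0 _ Cf.id with ha
  obtain ⟨k, hk⟩ := exists_h b
  obtain ⟨ψ, hψ, hψ'⟩ := exists_fm (FF_Sg (n := n))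
  have haK : ∀ᶠ m in UU, rep a m = (fun x : ℕ => x.unpair.1)^[k] (C.q k m) := by
    filter_upwards [rep_mkK (C := C) 0 _ Cf.id] with m h
    rw [q_iter, ha, h, C.q_zero]
  set q : MN C := mkK C k _ Cf.id with hq
  have hup : ∀ u v : MN C, ψ.Realize (Sum.elim ![u, v] ![q, a]) finZeroElim →
      ∀ᶠ m in UU, FF n (rep u m) (rep v m) (rep q m) (rep a m) := by
    intro u v h
    filter_upwards [up hψ _ _ h] with m hm
    have e : (fun i => rep ((finZeroElim : Fin 0 → MN C) i) m) = finZeroElim := by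
      funext i; exact i.elim0
    rw [e, hψ'] at hm
    simpa using hm
  refine ⟨fun u v => ψ.Realize (Sum.elim ![u, v] ![q, a]) finZeroElim, ⟨2, ψ, ![q, a], hψ, ?_⟩, ?_, ?_, ?_⟩
  · intro v
    have : ![v 0, v 1] = v := by funext i; fin_cases i <;> rfl
    beta_reduce
    rw [this]
  · intro u hu
    have huK : InK k u := by
      apply InK.of_le
      rw [lt_iff] at hu
      filter_upwards [hu, hk k le_rfl] with m h1 h2
      omega
    obtain ⟨f, hf, hfu⟩ := huK
    obtain ⟨e, he⟩ := hf.index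
    let a' : ℕ → ℕ := fun x => (fun x : ℕ => x.unpair.1)^[k] x
    have ha' : Cf n a' := Cf.left_iter k
    have hD : Dl n (fun x => e < a' x) := Dl.lt (Cf.const e) ha'
    obtain ⟨s, hs, hs'⟩ := Cf.exists_find (ρ := fun z : ℕ × ℕ => ¬ e < a' z.1 ∨ EE n z.1 (a' z.1) (f z.1) z.2)
      ((hD.comp Cf.fst).not.or (EE_Dl Cf.fst (ha'.comp Cf.fst) (hf.comp Cf.fst) Cf.snd)) (fun x => by
        by_cases hx : e < a' x
        · obtain ⟨j, hj⟩ := EE_total he hx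
          exact ⟨j, Or.inr hj⟩
        · exact ⟨0, Or.inl hx⟩)
    have hsD : ∀ x, e < a' x → EE n x (a' x) (f x) (s x) ∧ ∀ j < s x, ¬ EE n x (a' x) (f x) j := by
      intro x hx
      obtain ⟨h1, h2⟩ := hs' x
      exact ⟨h1.resolve_left fun h => h hx, fun j hj h => h2 j hj (Or.inr h)⟩
    have hDk : ∀ᶠ m in UU, e < a' (C.q k m) := by
      filter_upwards [UU_of_atTop (eventually_gt_atTop e)] with m hm
      show e < (fun x : ℕ => x.unpair.1)^[k] (C.q k m)
      rw [q_iter]; exact hm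
    refine ⟨mkK C k _ hs.right, ?_, ?_⟩
    · rw [lt_iff]
      filter_upwards [rep_mkK k _ hs.right, haK, hDk] with m h1 h2 h3
      rw [h1, h2]
      exact (hsD _ h3).1.1
    · refine down hψ hD hDk (Sum.elim ![f, fun x => (s x).unpair.2] ![id, a']) finZeroElim ?_ (fun i => i.elim0) ?_ _ _ ?_
        (fun i => i.elim0)
      · rintro (i | i) <;> fin_cases i
        · exact hf
        · exact hs.right
        · exact Cf.id
        · exact ha'
      · intro x hx
        have e0 : (fun i => (finZeroElim : Fin 0 → ℕ → ℕ) i x) = finZeroElim := by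
          funext i; exact i.elim0
        rw [e0, hψ']
        have : FF n (f x) (s x).unpair.2 x (a' x) := ⟨s x, hsD x hx, rfl⟩
        simpa using this
      · rintro (i | i) <;> fin_cases i
        · exact hfu
        · exact rep_mkK k _ hs.right
        · exact rep_mkK k _ Cf.id
        · exact haK
  · intro u v v' _ h1 h2
    rw [eq_iff]
    filter_upwards [hup _ _ h1, hup _ _ h2] with m h1 h2
    exact h1.fun h2
  · intro u u' v _ _ h1 h2
    rw [eq_iff]
    filter_upwards [hup _ _ h1, hup _ _ h2] with m h1 h2
    exact h1.inj h2

theorem final (n : ℕ) : ∃ (N : Type) (_ : lang.Structure N), PAm N ∧ ISig n N ∧ CARD N (n + 1) ∧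
      ∃ a : N, ∀ b : N, ExSigmaInj N (n + 1) b a := by
  obtain ⟨C⟩ := exists_chain n
  exact ⟨MN C, inferInstance, pam, isig, card, _, injections C⟩

end AH


namespace ArithFC

/-- For every `n ≥ 1`, PA⁻ + IΣn + CARD(Σ_{n+1}) does not prove
GPHP(Σ_{n+1}): there is a model `N` of PA⁻ + IΣn + CARD(Σ_{n+1}) and `a ∈ N` such
that for every `b` there is a Σ_{n+1}-definable injection from `[0,b)` into `[0,a)`. -/
theorem statement_11 (n : ℕ) (hn : 1 ≤ n) :
    ∃ (N : Type) (_ : lang.Structure N), PAm N ∧ ISig n N ∧ CARD N (n + 1) ∧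
      ∃ a : N, ∀ b : N, ExSigmaInj N (n + 1) b a := by
  exact AH.final n

end ArithFC
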